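/- arXiv:1809.01767 — 3 statements merged into one kernel-verified Lean document; each statement's English description precedes it below -/
import Mathlib

section
/- For all positive integers n, k, and l with k > l, the maximum size of a (k,l)-sum-free subset of Z_n equals max over all positive divisors d of n of α(Z_d,{k,l}) · (n/d). -/
/-!
The inequality `≥` holds because the preimage under `ZMod n → ZMod d` of a sum-free progression is
sum-free.

For `≤`, let `A` be a sum-free set of maximum size. If `A` has a nonzero period, it is the preimage
of a sum-free set in a proper quotient `ZMod d`, and induction on `n` applies (`exists_quotient`).
Otherwise, by maximality, `A + H` is not sum-free for any nontrivial subgroup `H`. Let `U` be the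
subgroup generated by `A - A`, and let `S ⊆ U` be a translate of `A`. By `vosper`, one of the
following holds.

* `A` is an arithmetic progression, so `|A| ≤ alphaZ n k l`.
* `|S + H| < min (|U|, |S| + |H|)` for some nontrivial subgroup `H`. Then `A` nearly fills the
  cosets of `H` it meets, and it meets at least two of them, which forces `A + H` to be sum-free
  (`sumFree_add_sgF`); this is excluded.
* `|X + S| ≥ |X| + |S|` for every `X` with at least two elements for which `X + S` misses at least
  two elements of `U`. Iterating gives `(k + l) |A| ≤ n` (`ap_or_small`), and an interval of that
  size has a sum-free translate (`le_alphaZ_of_small`).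

The theorem `vosper` is proved by Hamidoune's isoperimetric method. Among the admissible sets
minimising `|X + S| - |X|`, one of smallest cardinality containing `0` is a subgroup or a Sidon set
(`exists_atom`). If it is a subgroup, that subgroup is the required `H`; if it is a pair `{0, r}`,
then `S` is a progression or nearly periodic modulo `r`; if it is a Sidon set `M` with at least three
elements, applying `exists_atom` to `M` in place of `S` shows that `M` lies in a proper subgroup of
`U` (two Sidon sets with at least three elements have a large sumset), and `S` is nearly periodic
modulo the smallest such subgroup.
-/

open Finset Pointwise

/-- The `h`-fold sumset of a finite set `A`: all sums of `h` not-necessarily-distinct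
elements of `A` (with the convention that the `0`-fold sumset is `{0}`). -/
def foldSum {G : Type*} [AddCommMonoid G] [DecidableEq G] : ℕ → Finset G → Finset G
  | 0, _ => {0}
  | n + 1, A => A + foldSum n A

/-- `A` is `(k,l)`-sum-free if the `k`-fold and `l`-fold sumsets of `A` are disjoint. -/
def KLSumFree {G : Type*} [AddCommMonoid G] [DecidableEq G] (k l : ℕ) (A : Finset G) : Prop :=
  Disjoint (foldSum k A) (foldSum l A)

/-- `mu G k l` is the maximum size of a `(k,l)`-sum-free subset of `G`. -/
noncomputable def mu (G : Type*) [AddCommMonoid G] [DecidableEq G] (k l : ℕ) : ℕ :=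
  sSup {m | ∃ A : Finset G, KLSumFree k l A ∧ A.card = m}

/-- Ceiling division: `cdiv a b = ⌈a / b⌉` for `b > 0`. -/
def cdiv (a b : ℕ) : ℕ := (a + b - 1) / b

/-- The arithmetic progression `{a, a+b, ..., a+(m-1)b}` in `ZMod d`. -/
def apSet (d : ℕ) (a b : ZMod d) (m : ℕ) : Finset (ZMod d) :=
  (Finset.range m).image (fun i => a + i • b)

/-- Maximum size of a `(k,l)`-sum-free arithmetic progression in `ZMod d`. -/
noncomputable def alphaZ (d k l : ℕ) : ℕ :=
  sSup {m | ∃ a b : ZMod d, (apSet d a b m).card = m ∧ KLSumFree k l (apSet d a b m)}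

/-- Maximum size of a `(k,l)`-sum-free arithmetic progression in `ZMod d` whose common
difference is relatively prime to `d`. -/
noncomputable def gammaZ (d k l : ℕ) : ℕ :=
  sSup {m | ∃ a b : ZMod d, Nat.gcd (ZMod.val b) d = 1 ∧
    (apSet d a b m).card = m ∧ KLSumFree k l (apSet d a b m)}

/-! ### Finite subgroups and 2-atoms -/

section Isoperimetric

set_option linter.unusedSectionVars false

variable {G : Type*} [AddCommGroup G] [Fintype G] [DecidableEq G]

/-- The elements of a subgroup of a finite group, as a `Finset`. -/
noncomputable def sgF (U : AddSubgroup G) : Finset G := by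
  classical exact Finset.univ.filter (fun x => x ∈ U)

lemma mem_sgF {U : AddSubgroup G} {x : G} : x ∈ sgF U ↔ x ∈ U := by
  simp [sgF]

lemma mem_tr {g x : G} {M : Finset G} : x ∈ g +ᵥ M ↔ x - g ∈ M := by
  rw [Finset.mem_vadd_finset]
  constructor
  · rintro ⟨y, hy, rfl⟩
    simpa using hy
  · intro h
    exact ⟨x - g, h, by simp⟩

lemma sgF_pos (U : AddSubgroup G) : 0 < #(sgF U) :=
  Finset.card_pos.2 ⟨0, mem_sgF.2 U.zero_mem⟩

lemma two_card_le_of_lt {L U : AddSubgroup G} (h : L < U) : 2 * #(sgF L) ≤ #(sgF U) := by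
  obtain ⟨hle, x, hxU, hxL⟩ := SetLike.lt_iff_le_and_exists.1 h
  have hd : Disjoint (sgF L) (x +ᵥ sgF L) := by
    rw [Finset.disjoint_left]
    intro y hy hy'
    rw [mem_tr, mem_sgF] at hy'
    rw [mem_sgF] at hy
    exact hxL (by simpa using L.sub_mem hy hy')
  have hs : sgF L ∪ (x +ᵥ sgF L) ⊆ sgF U := by
    intro y hy
    rw [Finset.mem_union, mem_tr, mem_sgF, mem_sgF] at hy
    rw [mem_sgF]
    rcases hy with hy | hy
    · exact hle hy
    · simpa using U.add_mem (hle hy) hxU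
  have := Finset.card_le_card hs
  rw [Finset.card_union_of_disjoint hd, Finset.card_vadd_finset] at this
  omega

lemma add_subset_sgF {U : AddSubgroup G} {X S : Finset G} (hX : X ⊆ sgF U) (hS : S ⊆ sgF U) :
    X + S ⊆ sgF U := by
  intro y hy
  obtain ⟨a, ha, b, hb, rfl⟩ := Finset.mem_add.1 hy
  exact mem_sgF.2 (U.add_mem (mem_sgF.1 (hX ha)) (mem_sgF.1 (hS hb)))

lemma neg_subset_sgF {U : AddSubgroup G} {X : Finset G} (hX : X ⊆ sgF U) : -X ⊆ sgF U := by
  intro y hy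
  rw [Finset.mem_neg'] at hy
  exact mem_sgF.2 (neg_mem_iff.1 (mem_sgF.1 (hX hy)))

/-- `X` competes in the definition of the second isoperimetric number of `S` inside the
subgroup `U`: it has at least two elements, and `X + S` misses at least two elements of `U`. -/
def Adm (U : AddSubgroup G) (S X : Finset G) : Prop :=
  X ⊆ sgF U ∧ 2 ≤ #X ∧ #(X + S) + 2 ≤ #(sgF U)

/-- Distinct translates of `M` meet in at most one point, i.e. `M` is a Sidon set. -/
def Sidon (M : Finset G) : Prop := ∀ g : G, g ≠ 0 → #(M ∩ (g +ᵥ M)) ≤ 1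

lemma tr_add (g : G) (X S : Finset G) : (g +ᵥ X) + S = g +ᵥ (X + S) := by
  exact vadd_add_assoc g X S

lemma card_le_add {X S : Finset G} (hS : S.Nonempty) : #X ≤ #(X + S) :=
  Finset.card_le_card_add_right hS

/-- Submodularity of `X ↦ |X + S|`. -/
lemma card_add_submodular (X Y S : Finset G) :
    #((X ∩ Y) + S) + #((X ∪ Y) + S) ≤ #(X + S) + #(Y + S) := by
  rw [Finset.union_add, ← Finset.card_union_add_card_inter (X + S) (Y + S)]
  have := Finset.card_le_card (Finset.inter_add_subset (s₁ := X) (s₂ := Y) (t := S))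
  omega

/-- The complement in `U` of `M + S` is, up to sign, again admissible for `S`, and its excess
`|X + S| - |X|` is at most that of `M`. -/
lemma Adm.dual {U : AddSubgroup G} {S M : Finset G} (hSU : S ⊆ sgF U) (hM : Adm U S M) :
    Adm U S (-(sgF U \ (M + S))) ∧
      #(-(sgF U \ (M + S))) + #(M + S) = #(sgF U) ∧
      #(-(sgF U \ (M + S)) + S) + #M ≤ #(sgF U) := by
  obtain ⟨hMU, h2, hc⟩ := hM
  have hsub := add_subset_sgF hMU hSU
  have e1 : #(-(sgF U \ (M + S))) + #(M + S) = #(sgF U) := by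
    rw [Finset.card_neg, Finset.card_sdiff_add_card_eq_card hsub]
  have hN : -(sgF U \ (M + S)) ⊆ sgF U := neg_subset_sgF Finset.sdiff_subset
  have e2 : #(-(sgF U \ (M + S)) + S) + #M ≤ #(sgF U) := by
    have hd : Disjoint (-(sgF U \ (M + S)) + S) (-M) := by
      rw [Finset.disjoint_left]
      intro y hy hy'
      obtain ⟨a, ha, b, hb, rfl⟩ := Finset.mem_add.1 hy
      rw [Finset.mem_neg', Finset.mem_sdiff] at ha
      rw [Finset.mem_neg'] at hy'
      apply ha.2
      have := Finset.add_mem_add hy' hb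
      simpa using this
    rw [← Finset.card_neg M, ← Finset.card_union_of_disjoint hd]
    exact Finset.card_le_card (Finset.union_subset (add_subset_sgF hN hSU) (neg_subset_sgF hMU))
  exact ⟨⟨hN, by omega, by omega⟩, e1, e2⟩

/-- The structure of 2-atoms: among the admissible sets of minimal excess, one of minimal
cardinality has pairwise almost disjoint translates, so it is a subgroup or a Sidon set. -/
lemma exists_atom {U : AddSubgroup G} {S X : Finset G} (hSU : S ⊆ sgF U) (hS : S.Nonempty)
    (hX : Adm U S X) :
    ∃ M : Finset G, Adm U S M ∧ 0 ∈ M ∧ #(M + S) + #X ≤ #(X + S) + #M ∧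
      ((∃ H : AddSubgroup G, M = sgF H) ∨ Sidon M) := by
  classical
  obtain ⟨M₁, hM₁, hmin₁⟩ := Finset.exists_min_image
    (Finset.univ.filter (fun Y => Adm U S Y)) (fun Y => #(Y + S) - #Y) ⟨X, by simpa using hX⟩
  simp only [Finset.mem_filter, Finset.mem_univ, true_and] at hM₁ hmin₁
  obtain ⟨M₂, hM₂, hmin₂⟩ := Finset.exists_min_image
    (Finset.univ.filter (fun Y => Adm U S Y ∧ #(Y + S) - #Y = #(M₁ + S) - #M₁)) (fun Y => #Y)
    ⟨M₁, by simpa using hM₁⟩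
  simp only [Finset.mem_filter, Finset.mem_univ, true_and] at hM₂ hmin₂
  obtain ⟨hM₂, hκ⟩ := hM₂
  obtain ⟨a, ha⟩ : M₂.Nonempty := Finset.card_pos.1 (by have := hM₂.2.1; omega)
  -- translate so that the atom contains `0`
  obtain ⟨M, hMdef⟩ : ∃ M, M = (-a) +ᵥ M₂ := ⟨_, rfl⟩
  have hcM : #M = #M₂ := by rw [hMdef, Finset.card_vadd_finset]
  have hcMS : #(M + S) = #(M₂ + S) := by rw [hMdef, tr_add, Finset.card_vadd_finset]
  have h0 : (0 : G) ∈ M := by rw [hMdef, mem_tr]; simpa using ha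
  have hMU : M ⊆ sgF U := by
    intro y hy
    rw [hMdef, mem_tr] at hy
    have h1 := mem_sgF.1 (hM₂.1 hy)
    have h2 := mem_sgF.1 (hM₂.1 ha)
    rw [mem_sgF]
    simpa using U.sub_mem h1 h2
  have hM : Adm U S M := ⟨hMU, by rw [hcM]; exact hM₂.2.1, by rw [hcMS]; exact hM₂.2.2⟩
  have hle : ∀ Y : Finset G, #Y ≤ #(Y + S) := fun Y => card_le_add hS
  have hmin : ∀ Y, Adm U S Y → #(M + S) + #Y ≤ #(Y + S) + #M := by
    intro Y hY
    have := hmin₁ Y hY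
    have := hle Y
    have := hle M₂
    have := hle M₁
    omega
  have hminc : ∀ Y, Adm U S Y → #(Y + S) + #M ≤ #(M + S) + #Y → #M ≤ #Y := by
    intro Y hY h
    have h1 := hmin₁ Y hY
    have h2 := hle Y
    have h3 := hle M₂
    have h4 := hle M₁
    rw [hcM]
    exact hmin₂ Y ⟨hY, by omega⟩
  obtain ⟨hD, hD1, hD2⟩ := hM.dual hSU
  have hMD := hminc _ hD (by omega)
  have key : ∀ g : G, g +ᵥ M = M ∨ #(M ∩ (g +ᵥ M)) ≤ 1 := by
    intro g
    by_contra! hcon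
    obtain ⟨hne, h2⟩ := hcon
    have hgU : g ∈ U := by
      obtain ⟨y, hy⟩ : (M ∩ (g +ᵥ M)).Nonempty := Finset.card_pos.1 (by omega)
      rw [Finset.mem_inter, mem_tr] at hy
      simpa using U.sub_mem (mem_sgF.1 (hMU hy.1)) (mem_sgF.1 (hMU hy.2))
    have hgM : g +ᵥ M ⊆ sgF U := by
      intro y hy
      rw [mem_tr] at hy
      rw [mem_sgF]
      simpa using U.add_mem (mem_sgF.1 (hMU hy)) hgU
    have hcg : #(g +ᵥ M) = #M := Finset.card_vadd_finset _ _
    have hcgS : #((g +ᵥ M) + S) = #(M + S) := by rw [tr_add, Finset.card_vadd_finset]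
    have hI : Adm U S (M ∩ (g +ᵥ M)) := by
      refine ⟨Finset.inter_subset_left.trans hMU, by omega, ?_⟩
      have := Finset.card_le_card
        (Finset.add_subset_add_right (t := S) (Finset.inter_subset_left (s₁ := M) (s₂ := g +ᵥ M)))
      have := hM.2.2
      omega
    have hIlt : #(M ∩ (g +ᵥ M)) < #M := by
      refine Finset.card_lt_card (Finset.ssubset_iff_subset_ne.2 ⟨Finset.inter_subset_left, ?_⟩)
      intro h
      have : M ⊆ g +ᵥ M := Finset.inter_eq_left.1 h
      exact hne (Finset.eq_of_subset_of_card_le this hcg.le).symm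
    have hIex : #(M + S) + #(M ∩ (g +ᵥ M)) < #((M ∩ (g +ᵥ M)) + S) + #M := by
      by_contra! hh
      have := hminc _ hI hh
      omega
    have hsub := card_add_submodular M (g +ᵥ M) S
    have hcu := Finset.card_union_add_card_inter M (g +ᵥ M)
    by_cases hJ : #((M ∪ (g +ᵥ M)) + S) + 2 ≤ #(sgF U)
    · have := hmin (M ∪ (g +ᵥ M)) ⟨Finset.union_subset hMU hgM, by omega, hJ⟩
      omega
    · omega
  refine ⟨M, hM, h0, hmin X hX, ?_⟩
  by_cases hper : ∃ g : G, g ≠ 0 ∧ g +ᵥ M = M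
  · left
    obtain ⟨g, hg, hgM⟩ := hper
    have hst : ∀ a ∈ M, a +ᵥ M = M := by
      intro a ha
      refine (key a).resolve_right ?_
      have hga : a + g ∈ M := by rw [← hgM, mem_tr]; simpa using ha
      have hg0 : g ∈ M := by rw [← hgM, mem_tr]; simpa using h0
      have : ({a, a + g} : Finset G) ⊆ M ∩ (a +ᵥ M) := by
        intro y hy
        simp only [Finset.mem_insert, Finset.mem_singleton] at hy
        rw [Finset.mem_inter, mem_tr]
        rcases hy with rfl | rfl
        · simpa [h0] using ha
        · simpa [hg0] using hga
      have := Finset.card_le_card this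
      rw [Finset.card_pair (by simpa using hg)] at this
      omega
    refine ⟨⟨⟨⟨(M : Set G), ?_⟩, ?_⟩, ?_⟩, ?_⟩
    · intro a b ha hb
      have ha : a ∈ M := ha
      have hb : b ∈ M := hb
      show a + b ∈ M
      rw [← hst a ha, mem_tr]
      simpa using hb
    · exact h0
    · intro a ha
      have ha : a ∈ M := ha
      show -a ∈ M
      have : (0 : G) ∈ a +ᵥ M := by rw [hst a ha]; exact h0
      rw [mem_tr] at this
      simpa using this
    · ext y
      rw [mem_sgF]
      rfl
  · right
    push Not at hper
    intro g hg
    exact (key g).resolve_left (hper g hg)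

/-! ### Sidon sets and the Vosper-type theorem -/

lemma Sidon.two {M : Finset G} (hM : Sidon M) {x y : G} (hxy : x ≠ y) :
    #((x +ᵥ M) ∩ (y +ᵥ M)) ≤ 1 := by
  have h := hM (y - x) (sub_ne_zero.2 hxy.symm)
  have e : (x +ᵥ M) ∩ (y +ᵥ M) = x +ᵥ (M ∩ ((y - x) +ᵥ M)) := by
    ext z
    simp only [Finset.mem_inter, mem_tr]
    rw [show z - x - (y - x) = z - y by abel]
  rw [e, Finset.card_vadd_finset]
  exact h

lemma tr_subset_add {M L : Finset G} {x : G} (hx : x ∈ L) : x +ᵥ M ⊆ M + L := by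
  intro y hy
  rw [mem_tr] at hy
  have := Finset.add_mem_add hy hx
  simpa using this

/-- Three translates of a Sidon set `M` have at least `3|M| - 3` elements together. -/
lemma Sidon.card_add_of_le {M L : Finset G} (hM : Sidon M) (h3 : 3 ≤ #M) (h3' : 3 ≤ #L)
    (hle : #L ≤ #M) : #M + #L ≤ #(M + L) := by
  obtain ⟨T, hTL, hT⟩ := Finset.exists_subset_card_eq h3'
  obtain ⟨x, y, z, hxy, hxz, hyz, rfl⟩ := Finset.card_eq_three.1 hT
  have hx : x ∈ L := hTL (by simp)
  have hy : y ∈ L := hTL (by simp)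
  have hz : z ∈ L := hTL (by simp)
  have h1 := Finset.card_union_add_card_inter (x +ᵥ M) (y +ᵥ M)
  have h2 := Finset.card_union_add_card_inter ((x +ᵥ M) ∪ (y +ᵥ M)) (z +ᵥ M)
  rw [Finset.union_inter_distrib_right] at h2
  have h4 := Finset.card_union_le ((x +ᵥ M) ∩ (z +ᵥ M)) ((y +ᵥ M) ∩ (z +ᵥ M))
  have a1 := hM.two hxy
  have a2 := hM.two hxz
  have a3 := hM.two hyz
  have hs := Finset.card_le_card (Finset.union_subset
    (Finset.union_subset (tr_subset_add (M := M) hx) (tr_subset_add (M := M) hy))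
    (tr_subset_add (M := M) hz))
  simp only [Finset.card_vadd_finset] at h1 h2
  omega

lemma Sidon.card_add {M L : Finset G} (hM : Sidon M) (hL : Sidon L) (h3 : 3 ≤ #M)
    (h3' : 3 ≤ #L) : #M + #L ≤ #(M + L) := by
  rcases le_total (#L) (#M) with h | h
  · exact hM.card_add_of_le h3 h3' h
  · have := hL.card_add_of_le h3' h3 h
    rw [add_comm L M] at this
    omega

/-- A Sidon set with at least three elements that adds badly inside `U` lies in a proper
subgroup of `U`: its own 2-atom can be neither a Sidon set nor a subgroup not containing it. -/
lemma Sidon.exists_subgroup {U : AddSubgroup G} {M X : Finset G} (hM : Sidon M) (h3 : 3 ≤ #M)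
    (hMU : M ⊆ sgF U) (h0 : 0 ∈ M) (hX : Adm U M X) (hXM : #(X + M) < #X + #M) :
    ∃ L : AddSubgroup G, M ⊆ sgF L ∧ L ≤ U ∧ #(sgF L) + 2 ≤ #(sgF U) := by
  obtain ⟨L, ⟨hLU, hL2, hLM⟩, hL0, hex, hL⟩ := exists_atom hMU ⟨0, h0⟩ hX
  have hlt : #(M + L) < #L + #M := by rw [add_comm M L]; omega
  rcases hL with ⟨H, rfl⟩ | hL
  · by_cases hsub : M ⊆ sgF H
    · refine ⟨H, hsub, fun x hx => mem_sgF.1 (hLU (mem_sgF.2 hx)), ?_⟩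
      have := card_le_add (X := sgF H) (S := M) ⟨0, h0⟩
      omega
    · exfalso
      obtain ⟨a, haM, haH⟩ := Finset.not_subset.1 hsub
      -- `M + H` contains the two cosets `H` and `a + H`
      have hd : Disjoint (sgF H) (a +ᵥ sgF H) := by
        rw [Finset.disjoint_left]
        intro y hy hy'
        rw [mem_tr, mem_sgF] at hy'
        rw [mem_sgF] at hy
        exact haH (mem_sgF.2 (by simpa using H.sub_mem hy hy'))
      have hs : sgF H ∪ (a +ᵥ sgF H) ⊆ sgF H + M := by
        refine Finset.union_subset ?_ (tr_subset_add haM)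
        simpa using tr_subset_add (M := sgF H) h0
      have h1 := Finset.card_le_card hs
      rw [Finset.card_union_of_disjoint hd, Finset.card_vadd_finset, add_comm (sgF H) M] at h1
      obtain ⟨h, hh, hne⟩ := Finset.exists_mem_ne (show 1 < #(sgF H) by omega) 0
      have h2 := hM h hne
      have h4 := Finset.card_union_add_card_inter M (h +ᵥ M)
      have h5 : M ∪ (h +ᵥ M) ⊆ M + sgF H := by
        refine Finset.union_subset ?_ (tr_subset_add hh)
        simpa using tr_subset_add (M := M) hL0
      have h6 := Finset.card_le_card h5
      rw [Finset.card_vadd_finset] at h4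
      omega
  · exfalso
    by_cases hL3 : 3 ≤ #L
    · have := hM.card_add hL h3 hL3
      omega
    · obtain ⟨r, hr, hne⟩ := Finset.exists_mem_ne (show 1 < #L by omega) 0
      have h2 := hM r hne
      have h4 := Finset.card_union_add_card_inter M (r +ᵥ M)
      have h5 : M ∪ (r +ᵥ M) ⊆ M + L := by
        refine Finset.union_subset ?_ (tr_subset_add hr)
        simpa using tr_subset_add (M := M) hL0
      have h6 := Finset.card_le_card h5
      rw [Finset.card_vadd_finset] at h4
      omega

/-- If translation by every element of `M` maps `T` into itself, then so does translation by the
elements of a subgroup containing `M`. -/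
lemma exists_stab {M T : Finset G} (h : ∀ g ∈ M, ∀ t ∈ T, t + g ∈ T) :
    ∃ P : AddSubgroup G, M ⊆ sgF P ∧ ∀ g ∈ P, ∀ t ∈ T, t + g ∈ T := by
  have hf : ∀ g : G, (∀ t ∈ T, t + g ∈ T) → g +ᵥ T = T := by
    intro g hg
    refine Finset.eq_of_subset_of_card_le ?_ (Finset.card_vadd_finset _ _).ge
    intro y hy
    rw [mem_tr] at hy
    simpa using hg _ hy
  refine ⟨⟨⟨⟨{g | ∀ t ∈ T, t + g ∈ T}, ?_⟩, ?_⟩, ?_⟩, ?_, fun g hg => hg⟩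
  · intro a b ha hb t ht
    rw [← add_assoc]
    exact hb _ (ha _ ht)
  · intro t ht
    simpa using ht
  · intro a ha t ht
    have := hf a ha
    rw [← this, mem_tr] at ht
    simpa [sub_eq_add_neg] using ht
  · intro g hg
    exact mem_sgF.2 (h g hg)

/-- If everything of `S` outside the coset `s + L` is `L`-periodic, then `S` is almost
`L`-periodic. -/
lemma card_add_sgF_lt {S : Finset G} {L : AddSubgroup G} {s : G} (hs : s ∈ S)
    (h : ∀ g ∈ L, ∀ t ∈ S, t - s ∉ L → t + g ∈ S) : #(S + sgF L) < #S + #(sgF L) := by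
  have hsub : S + sgF L ⊆ (S \ (s +ᵥ sgF L)) ∪ (s +ᵥ sgF L) := by
    intro y hy
    obtain ⟨a, ha, b, hb, rfl⟩ := Finset.mem_add.1 hy
    rw [mem_sgF] at hb
    rw [Finset.sdiff_union_self_eq_union, Finset.mem_union, mem_tr, mem_sgF]
    by_cases hc : a - s ∈ L
    · right
      rw [show a + b - s = (a - s) + b by abel]
      exact L.add_mem hc hb
    · exact Or.inl (h b hb a ha hc)
  have h1 := Finset.card_le_card hsub
  have h2 := Finset.card_union_le (S \ (s +ᵥ sgF L)) (s +ᵥ sgF L)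
  have h3 : #(S \ (s +ᵥ sgF L)) < #S := by
    refine Finset.card_lt_card (Finset.ssubset_iff_of_subset Finset.sdiff_subset |>.2 ⟨s, hs, ?_⟩)
    simp [mem_tr, mem_sgF, L.zero_mem]
  rw [Finset.card_vadd_finset] at h2
  omega

/-- A set with `S + {0, r}` barely larger than `S` is a progression of difference `-r`, or is
almost periodic modulo the subgroup generated by `r`. -/
lemma ap_or_almost_periodic {U : AddSubgroup G} {S : Finset G} {r : G} (hSU : S ⊆ sgF U)
    (hS : S.Nonempty) (hr : r ≠ 0) (hrU : r ∈ U) (hhalf : 2 * #S ≤ #(sgF U))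
    (hc : #(S ∪ (r +ᵥ S)) ≤ #S + 1) :
    (∃ a b : G, S = (Finset.range #S).image (fun i : ℕ => a + i • b)) ∨
    ∃ H : AddSubgroup G, H ≤ U ∧ 2 ≤ #(sgF H) ∧ #(S + sgF H) < #(sgF U) ∧
      #(S + sgF H) < #S + #(sgF H) := by
  classical
  let H := AddSubgroup.zmultiples r
  have hrH : r ∈ H := AddSubgroup.mem_zmultiples r
  have hHU : H ≤ U := by
    rw [AddSubgroup.zmultiples_le]
    exact hrU
  have hH2 : 2 ≤ #(sgF H) := by
    have : ({0, r} : Finset G) ⊆ sgF H := by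
      intro y hy
      simp only [Finset.mem_insert, Finset.mem_singleton] at hy
      rw [mem_sgF]
      rcases hy with rfl | rfl
      · exact H.zero_mem
      · exact hrH
    have := Finset.card_le_card this
    rwa [Finset.card_pair hr.symm] at this
  have hstab : ∀ T : Finset G, (∀ t ∈ T, t + r ∈ T) → ∀ g ∈ H, ∀ t ∈ T, t + g ∈ T := by
    intro T hT
    obtain ⟨P, hP, hPT⟩ := exists_stab (M := {r}) (T := T) (by simpa using hT)
    intro g hg
    refine hPT g ?_
    have : H ≤ P := by
      rw [AddSubgroup.zmultiples_le]
      exact mem_sgF.1 (hP (by simp))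
    exact this hg
  -- at most one element of `S` leaves `S` under translation by `r`
  have hone : ∀ s ∈ S, ∀ t ∈ S, s + r ∉ S → t + r ∉ S → s = t := by
    intro s hs t ht hs' ht'
    by_contra hne
    have hsub : S ∪ {s + r, t + r} ⊆ S ∪ (r +ᵥ S) := by
      refine Finset.union_subset_union_right ?_
      intro y hy
      simp only [Finset.mem_insert, Finset.mem_singleton] at hy
      rw [mem_tr]
      rcases hy with rfl | rfl <;> simpa
    have hd : Disjoint S {s + r, t + r} := by
      rw [Finset.disjoint_right]
      intro y hy
      simp only [Finset.mem_insert, Finset.mem_singleton] at hy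
      rcases hy with rfl | rfl <;> assumption
    have := Finset.card_le_card hsub
    rw [Finset.card_union_of_disjoint hd, Finset.card_pair (by simpa using hne)] at this
    omega
  obtain ⟨s₀, hs₀, hper⟩ : ∃ s ∈ S, ∀ t ∈ S, t ≠ s → t + r ∈ S := by
    by_cases h : ∃ s ∈ S, s + r ∉ S
    · obtain ⟨s, hs, hs'⟩ := h
      refine ⟨s, hs, fun t ht hne => ?_⟩
      by_contra htr
      exact hne (hone t ht s hs htr hs')
    · push Not at h
      obtain ⟨s, hs⟩ := hS
      exact ⟨s, hs, fun t ht _ => h t ht⟩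
  have hlt : #(S + sgF H) < #S + #(sgF H) := by
    refine card_add_sgF_lt hs₀ ?_
    intro g hg t ht hts
    have := hstab (S.filter (fun t => t - s₀ ∉ H)) (by
      intro t ht
      rw [Finset.mem_filter] at ht ⊢
      refine ⟨hper t ht.1 ?_, ?_⟩
      · rintro rfl
        exact ht.2 (by simp [H.zero_mem])
      · intro hh
        apply ht.2
        have := H.sub_mem hh hrH
        rwa [show t + r - s₀ - r = t - s₀ by abel] at this) g hg t
          (Finset.mem_filter.2 ⟨ht, hts⟩)
    exact (Finset.mem_filter.1 this).1
  by_cases hHU' : H = U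
  · by_cases hend : s₀ + r ∈ S
    · -- then `S` is `U`-periodic, which its size forbids
      exfalso
      have hp : ∀ t ∈ S, t + r ∈ S := by
        intro t ht
        by_cases h : t = s₀
        · rw [h]; exact hend
        · exact hper t ht h
      have hU : sgF U ⊆ S := by
        intro y hy
        have := hstab S hp (y - s₀) (by
          rw [hHU']
          exact U.sub_mem (mem_sgF.1 hy) (mem_sgF.1 (hSU hs₀))) s₀ hs₀
        simpa using this
      have := Finset.card_le_card hU
      have := Finset.card_pos.2 hS
      omega
    · left
      -- walk backwards from the end point `s₀`
      have hex : ∃ j : ℕ, s₀ + j • (-r) ∉ S := by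
        refine ⟨addOrderOf r - 1, ?_⟩
        have hpos : 0 < addOrderOf r := addOrderOf_pos r
        have : (addOrderOf r - 1) • (-r) = r := by
          have h1 : (addOrderOf r - 1) • r + r = 0 := by
            rw [← succ_nsmul, Nat.sub_add_cancel hpos, addOrderOf_nsmul_eq_zero]
          rw [smul_neg, neg_eq_iff_add_eq_zero]
          exact h1
        rw [this]
        exact hend
      obtain ⟨j, hj, hjmin⟩ : ∃ j : ℕ, s₀ + j • (-r) ∉ S ∧ ∀ i < j, s₀ + i • (-r) ∈ S :=
        ⟨Nat.find hex, Nat.find_spec hex, fun i hi => by simpa using Nat.find_min hex hi⟩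
      have hinj : Set.InjOn (fun i : ℕ => s₀ + i • (-r)) (Finset.range j) := by
        have aux : ∀ i i' : ℕ, i < i' → i' < j → s₀ + i • (-r) ≠ s₀ + i' • (-r) := by
          intro i i' hii hi'j he
          apply hj
          have h1 := hjmin (i + (j - i')) (by omega)
          have h2 : s₀ + (i + (j - i')) • (-r) = s₀ + j • (-r) := by
            rw [add_nsmul, ← add_assoc, he, add_assoc, ← add_nsmul]
            congr 2
            omega
          rwa [h2] at h1
        intro i hi i' hi' he
        simp only [Finset.coe_range, Set.mem_Iio] at hi hi'
        rcases lt_trichotomy i i' with h | h | h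
        · exact absurd he (aux i i' h hi')
        · exact h
        · exact absurd he.symm (aux i' i h hi)
      have hST : S = (Finset.range j).image (fun i : ℕ => s₀ + i • (-r)) := by
        by_contra hne
        have hTS : (Finset.range j).image (fun i : ℕ => s₀ + i • (-r)) ⊆ S := by
          intro y hy
          obtain ⟨i, hi, rfl⟩ := Finset.mem_image.1 hy
          exact hjmin i (Finset.mem_range.1 hi)
        have hj0 : 0 < j := by
          by_contra h
          have : j = 0 := by omega
          subst this
          exact hj (by simpa using hs₀)
        have hs₀T : s₀ ∈ (Finset.range j).image (fun i : ℕ => s₀ + i • (-r)) :=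
          Finset.mem_image.2 ⟨0, Finset.mem_range.2 hj0, by simp⟩
        obtain ⟨x, hx, hxT⟩ : ∃ x ∈ S, x ∉ (Finset.range j).image (fun i : ℕ => s₀ + i • (-r)) := by
          by_contra! hh
          exact hne (Finset.Subset.antisymm hh hTS)
        -- the rest of `S` would be periodic
        have hp := hstab (S \ (Finset.range j).image (fun i : ℕ => s₀ + i • (-r))) (by
          intro t ht
          rw [Finset.mem_sdiff] at ht ⊢
          refine ⟨hper t ht.1 ?_, ?_⟩
          · rintro rfl
            exact ht.2 hs₀T
          · intro htr
            obtain ⟨i, hi, he⟩ := Finset.mem_image.1 htr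
            have ht' : t = s₀ + (i + 1) • (-r) := by
              rw [succ_nsmul, ← add_assoc]
              rw [he]
              abel
            rw [Finset.mem_range] at hi
            by_cases hij : i + 1 < j
            · exact ht.2 (Finset.mem_image.2 ⟨i + 1, Finset.mem_range.2 hij, ht'.symm⟩)
            · have : i + 1 = j := by omega
              rw [this] at ht'
              exact hj (ht' ▸ ht.1)) (s₀ - x) (by
                rw [hHU']
                exact U.sub_mem (mem_sgF.1 (hSU hs₀)) (mem_sgF.1 (hSU hx))) x
                (Finset.mem_sdiff.2 ⟨hx, hxT⟩)
        rw [add_sub_cancel] at hp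
        exact (Finset.mem_sdiff.1 hp).2 hs₀T
      have hcard : #S = j := by
        rw [hST, Finset.card_image_of_injOn hinj, Finset.card_range]
      exact ⟨s₀, -r, by rw [hcard]; exact hST⟩
  · right
    have := two_card_le_of_lt (lt_of_le_of_ne hHU hHU')
    exact ⟨H, hHU, hH2, by omega, hlt⟩

/-- Hamidoune's form of Vosper's theorem: a set `S` filling at most half of `U`, for which some
admissible `X` satisfies `|X + S| < |X| + |S|`, is an arithmetic progression or is almost
periodic modulo a nontrivial subgroup. -/
theorem vosper {U : AddSubgroup G} {S X : Finset G} (hSU : S ⊆ sgF U) (hS2 : 2 ≤ #S)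
    (hhalf : 2 * #S ≤ #(sgF U)) (hX : Adm U S X) (hXS : #(X + S) < #X + #S) :
    (∃ a b : G, S = (Finset.range #S).image (fun i : ℕ => a + i • b)) ∨
    ∃ H : AddSubgroup G, H ≤ U ∧ 2 ≤ #(sgF H) ∧ #(S + sgF H) < #(sgF U) ∧
      #(S + sgF H) < #S + #(sgF H) := by
  classical
  have hSne : S.Nonempty := Finset.card_pos.1 (by omega)
  obtain ⟨M, ⟨hMU, hM2, hMS⟩, h0, hex, hM⟩ := exists_atom hSU hSne hX
  have hlt : #(S + M) < #S + #M := by rw [add_comm S M]; omega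
  rcases hM with ⟨H, rfl⟩ | hM
  · right
    refine ⟨H, fun x hx => mem_sgF.1 (hMU (mem_sgF.2 hx)), hM2, ?_, hlt⟩
    rw [add_comm S]
    omega
  by_cases hM3 : #M = 2
  · obtain ⟨r, hr, hne⟩ := Finset.exists_mem_ne (show 1 < #M by omega) 0
    refine ap_or_almost_periodic hSU hSne hne (mem_sgF.1 (hMU hr)) hhalf ?_
    have : S ∪ (r +ᵥ S) ⊆ S + M := by
      refine Finset.union_subset ?_ (tr_subset_add hr)
      simpa using tr_subset_add (M := S) h0
    have := Finset.card_le_card this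
    omega
  have hM3 : 3 ≤ #M := by omega
  -- `L` is a smallest proper subgroup of `U` containing `M`
  obtain ⟨L₀, hL₀⟩ := hM.exists_subgroup hM3 hMU h0
    (X := S) ⟨hSU, hS2, by rw [add_comm S M]; exact hMS⟩ hlt
  obtain ⟨L, hL, hLmin⟩ := Finset.exists_min_image
    (Finset.univ.filter (fun L : AddSubgroup G => M ⊆ sgF L ∧ L ≤ U ∧ #(sgF L) + 2 ≤ #(sgF U)))
    (fun L => #(sgF L)) ⟨L₀, by simpa using hL₀⟩
  simp only [Finset.mem_filter, Finset.mem_univ, true_and] at hL hLmin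
  obtain ⟨hML, hLU, hLc⟩ := hL
  have hgrow : ∀ Y, Adm L M Y → #Y + #M ≤ #(Y + M) := by
    intro Y hY
    by_contra! hh
    obtain ⟨L', h1, h2, h3⟩ := hM.exists_subgroup hM3 hML h0 hY hh
    have := hLmin L' ⟨h1, h2.trans hLU, by omega⟩
    omega
  have hMLc := Finset.card_le_card hML
  suffices hmain : #(S + sgF L) < #S + #(sgF L) by
    right
    have hltU : L < U := lt_of_le_of_ne hLU (by rintro rfl; omega)
    have := two_card_le_of_lt hltU
    exact ⟨L, hLU, by omega, by omega, hmain⟩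
  by_cases hfull : S + sgF L ⊆ S + M
  · have := Finset.card_le_card hfull
    omega
  obtain ⟨z, hz, hzM⟩ := Finset.not_subset.1 hfull
  obtain ⟨s, hs, g, hg, rfl⟩ := Finset.mem_add.1 hz
  rw [mem_sgF] at hg
  -- the part of `S` in the coset `s + L`, moved into `L`
  let Y : Finset G := (sgF L).filter (fun y => y + s ∈ S)
  let S₁ : Finset G := S.filter (fun t => t - s ∈ L)
  let S' : Finset G := S.filter (fun t => t - s ∉ L)
  have hYL : Y ⊆ sgF L := Finset.filter_subset _ _
  have hS₁Y : S₁ = s +ᵥ Y := by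
    ext t
    simp [S₁, Y, mem_tr, mem_sgF, and_comm]
  have hcS₁ : #S₁ = #Y := by rw [hS₁Y, Finset.card_vadd_finset]
  have hcS₁M : #(S₁ + M) = #(Y + M) := by rw [hS₁Y, tr_add, Finset.card_vadd_finset]
  have h0Y : (0 : G) ∈ Y := by simp [Y, mem_sgF, L.zero_mem, hs]
  have hYpos : 0 < #Y := Finset.card_pos.2 ⟨0, h0Y⟩
  have hgY : g ∉ Y + M := by
    intro hgY
    apply hzM
    obtain ⟨y, hy, m, hm, rfl⟩ := Finset.mem_add.1 hgY
    have := Finset.add_mem_add (Finset.mem_filter.1 hy).2 hm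
    rwa [show y + s + m = s + (y + m) by abel] at this
  have hYM : #Y + #M ≤ #(Y + M) + 1 := by
    by_cases hY1 : #Y = 1
    · have := Finset.card_le_card_add_left (s := Y) (t := M) ⟨0, h0Y⟩
      omega
    by_cases hY2 : #(Y + M) + 2 ≤ #(sgF L)
    · have := hgrow Y ⟨hYL, by omega, hY2⟩
      omega
    -- `Y` avoids `g - M`
    have hd : Disjoint Y (g +ᵥ (-M)) := by
      rw [Finset.disjoint_left]
      intro y hy hy'
      rw [mem_tr, Finset.mem_neg'] at hy'
      apply hgY
      have := Finset.add_mem_add hy hy'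
      simpa using this
    have hsub : Y ∪ (g +ᵥ (-M)) ⊆ sgF L := by
      refine Finset.union_subset hYL ?_
      intro y hy
      rw [mem_tr] at hy
      have := mem_sgF.1 (neg_subset_sgF hML hy)
      rw [mem_sgF]
      simpa using L.add_mem this hg
    have := Finset.card_le_card hsub
    rw [Finset.card_union_of_disjoint hd, Finset.card_vadd_finset, Finset.card_neg] at this
    omega
  have hcS : #S₁ + #S' = #S := Finset.card_filter_add_card_filter_not _
  have hcSM : #(S₁ + M) + #(S' + M) ≤ #(S + M) := by
    have hd : Disjoint (S₁ + M) (S' + M) := by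
      rw [Finset.disjoint_left]
      intro y hy hy'
      obtain ⟨a, ha, b, hb, rfl⟩ := Finset.mem_add.1 hy
      obtain ⟨c, hc, d, hd, he⟩ := Finset.mem_add.1 hy'
      apply (Finset.mem_filter.1 hc).2
      have h1 := (Finset.mem_filter.1 ha).2
      have h2 := mem_sgF.1 (hML hb)
      have h3 := mem_sgF.1 (hML hd)
      have h4 : c - s = (a - s) + b - d := by
        rw [eq_sub_of_add_eq he]; abel
      rw [h4]
      exact L.sub_mem (L.add_mem h1 h2) h3
    rw [← Finset.card_union_of_disjoint hd]
    exact Finset.card_le_card (Finset.union_subset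
      (Finset.add_subset_add_right (Finset.filter_subset _ _))
      (Finset.add_subset_add_right (Finset.filter_subset _ _)))
  have hS'M : S' + M = S' := by
    symm
    refine Finset.eq_of_subset_of_card_le ?_ (by omega)
    simpa using tr_subset_add (M := S') h0
  obtain ⟨P, hMP, hP⟩ := exists_stab (M := M) (T := S') (by
    intro g hg t ht
    rw [← hS'M]
    exact Finset.add_mem_add ht hg)
  have hLP : L ≤ P := by
    have h1 : sgF (L ⊓ P) ⊆ sgF L := fun x hx => mem_sgF.2 (mem_sgF.1 hx).1
    have h2 := hLmin (L ⊓ P) ⟨fun x hx => mem_sgF.2 ⟨mem_sgF.1 (hML hx), mem_sgF.1 (hMP hx)⟩,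
      inf_le_left.trans hLU, by have := Finset.card_le_card h1; omega⟩
    have h3 := Finset.eq_of_subset_of_card_le h1 h2
    intro x hx
    have : x ∈ sgF (L ⊓ P) := by rw [h3]; exact mem_sgF.2 hx
    exact (mem_sgF.1 this).2
  refine card_add_sgF_lt hs ?_
  intro g hg t ht hts
  exact (Finset.mem_filter.1 (hP g (hLP hg) t (Finset.mem_filter.2 ⟨ht, hts⟩))).1

/-! ### Sum-free sets in finite abelian groups -/

lemma foldSum_succ (k : ℕ) (A : Finset G) : foldSum (k + 1) A = A + foldSum k A := rfl

lemma foldSum_nonempty {A : Finset G} (hA : A.Nonempty) (k : ℕ) : (foldSum k A).Nonempty := by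
  induction k with
  | zero => exact ⟨0, by simp [foldSum]⟩
  | succ k ih => exact hA.add ih

lemma foldSum_subset_sgF {U : AddSubgroup G} {S : Finset G} (hS : S ⊆ sgF U) (k : ℕ) :
    foldSum k S ⊆ sgF U := by
  induction k with
  | zero =>
    intro x hx
    simp only [foldSum, Finset.mem_singleton] at hx
    rw [hx, mem_sgF]
    exact U.zero_mem
  | succ k ih => exact add_subset_sgF hS ih

lemma nsmul_mem_foldSum {A : Finset G} {a : G} (ha : a ∈ A) (k : ℕ) : k • a ∈ foldSum k A := by
  induction k with
  | zero => simp [foldSum]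
  | succ k ih =>
    rw [succ_nsmul', foldSum_succ]
    exact Finset.add_mem_add ha ih

lemma foldSum_mono {A B : Finset G} (h : A ⊆ B) (k : ℕ) : foldSum k A ⊆ foldSum k B := by
  induction k with
  | zero => exact subset_rfl
  | succ k ih => exact Finset.add_subset_add h ih

lemma foldSum_neg {S : Finset G} (k : ℕ) : foldSum k (-S) = -foldSum k S := by
  induction k with
  | zero => simp [foldSum]
  | succ k ih => rw [foldSum_succ, foldSum_succ, ih, neg_add]

lemma foldSum_tr {S : Finset G} {a x : G} {k : ℕ} (hx : x ∈ foldSum k S) :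
    k • a + x ∈ foldSum k (a +ᵥ S) := by
  induction k generalizing x with
  | zero => simpa [foldSum] using hx
  | succ k ih =>
    obtain ⟨s, hs, y, hy, rfl⟩ := Finset.mem_add.1 hx
    rw [foldSum_succ, succ_nsmul', show a + k • a + (s + y) = (s + a) + (k • a + y) by abel]
    exact Finset.add_mem_add (by rw [mem_tr]; simpa using hs) (ih hy)

lemma foldSum_add_sgF {A : Finset G} {H : AddSubgroup G} {y : G} {k : ℕ}
    (hy : y ∈ foldSum k (A + sgF H)) : ∃ x ∈ foldSum k A, y - x ∈ H := by
  induction k generalizing y with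
  | zero => exact ⟨y, hy, by simp [H.zero_mem]⟩
  | succ k ih =>
    obtain ⟨z, hz, y, hy', rfl⟩ := Finset.mem_add.1 hy
    obtain ⟨a, ha, h, hh, rfl⟩ := Finset.mem_add.1 hz
    obtain ⟨x, hx, hyx⟩ := ih hy'
    refine ⟨a + x, Finset.add_mem_add ha hx, ?_⟩
    rw [show a + h + y - (a + x) = h + (y - x) by abel]
    exact H.add_mem (mem_sgF.1 hh) hyx

/-- A `k`-fold sum either has a summand outside `c + H`, or is congruent to `k • c` mod `H`. -/
lemma foldSum_split {A : Finset G} {H : AddSubgroup G} (c : G) {x : G} {k : ℕ}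
    (hx : x ∈ foldSum k A) :
    (∃ k', k = k' + 1 ∧ ∃ a ∈ A, a - c ∉ H ∧ ∃ r ∈ foldSum k' A, x = a + r) ∨ x - k • c ∈ H := by
  induction k generalizing x with
  | zero =>
    right
    simp only [foldSum, Finset.mem_singleton] at hx
    simp [hx, H.zero_mem]
  | succ k ih =>
    obtain ⟨a, ha, r, hr, rfl⟩ := Finset.mem_add.1 hx
    by_cases hac : a - c ∈ H
    · rcases ih hr with ⟨k', rfl, b, hb, hbc, s, hs, rfl⟩ | h
      · left
        exact ⟨k' + 1, rfl, b, hb, hbc, a + s, Finset.add_mem_add ha hs, by abel⟩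
      · right
        rw [succ_nsmul', show a + r - (c + k • c) = (a - c) + (r - k • c) by abel]
        exact H.add_mem hac h
    · left
      exact ⟨k, rfl, a, ha, hac, r, hr, rfl⟩

/-- If `A` lacks fewer than `|H|` elements of `A + H`, then `A` fills any two cosets it meets so
well that differences between them cover a whole coset of `H`. -/
lemma exists_sub_eq {A : Finset G} {H : AddSubgroup G} (hlt : #(A + sgF H) < #A + #(sgF H))
    {a b h : G} (ha : a ∈ A) (hb : b ∈ A) (hab : a - b ∉ H) (hh : h ∈ H) :
    ∃ p ∈ A, ∃ q ∈ A, p - q = a - b + h := by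
  by_contra! hcon
  have hd1 : Disjoint (a +ᵥ sgF H) (b +ᵥ sgF H) := by
    rw [Finset.disjoint_left]
    intro y hy hy'
    rw [mem_tr, mem_sgF] at hy hy'
    apply hab
    rw [show a - b = (y - b) - (y - a) by abel]
    exact H.sub_mem hy' hy
  -- the elements of `a + H` missing from `A`, and those of `b + H`, number at least `|H|`
  let P := (a +ᵥ sgF H) \ A
  let Q := (b +ᵥ sgF H) \ A
  have hQ : (a +ᵥ sgF H) ⊆ P ∪ ((a - b + h) +ᵥ Q) := by
    intro y hy
    rw [Finset.mem_union]
    by_cases hyA : y ∈ A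
    · right
      rw [mem_tr, Finset.mem_sdiff, mem_tr, mem_sgF]
      rw [mem_tr, mem_sgF] at hy
      refine ⟨?_, ?_⟩
      · rw [show y - (a - b + h) - b = (y - a) - h by abel]
        exact H.sub_mem hy hh
      · intro hq
        exact hcon y hyA _ hq (by abel)
    · left
      exact Finset.mem_sdiff.2 ⟨hy, hyA⟩
  have h1 := Finset.card_le_card hQ
  have h2 := Finset.card_union_le P ((a - b + h) +ᵥ Q)
  rw [Finset.card_vadd_finset] at h1 h2
  have h0 : (0 : G) ∈ sgF H := mem_sgF.2 H.zero_mem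
  have hsub : A ∪ (P ∪ Q) ⊆ A + sgF H := by
    refine Finset.union_subset ?_ (Finset.union_subset ?_ ?_)
    · simpa using tr_subset_add (M := A) h0
    · refine Finset.sdiff_subset.trans ?_
      rw [add_comm]
      exact tr_subset_add ha
    · refine Finset.sdiff_subset.trans ?_
      rw [add_comm]
      exact tr_subset_add hb
  have h3 := Finset.card_le_card hsub
  rw [Finset.card_union_of_disjoint, Finset.card_union_of_disjoint] at h3
  · omega
  · exact Finset.disjoint_of_subset_left Finset.sdiff_subset
      (Finset.disjoint_of_subset_right Finset.sdiff_subset hd1)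
  · rw [Finset.disjoint_union_right]
    exact ⟨Finset.disjoint_sdiff, Finset.disjoint_sdiff⟩

/-- An almost `H`-periodic sum-free set, not inside one coset of `H`, stays sum-free after adding
`H`. A coincidence `k`-fold sum ≡ `l`-fold sum mod `H` can always be arranged to involve summands
from different cosets on the two sides; replacing these summands turns it into an equality. -/
lemma sumFree_add_sgF {A : Finset G} {H : AddSubgroup G} {k l : ℕ} (hl : 0 < l) (hkl : l < k)
    (hlt : #(A + sgF H) < #A + #(sgF H)) (hco : ∀ c ∈ A, ∃ y ∈ A, y - c ∉ H)
    (hA : KLSumFree k l A) : KLSumFree k l (A + sgF H) := by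
  obtain ⟨l, rfl⟩ : ∃ l', l = l' + 1 := ⟨l - 1, by omega⟩
  obtain ⟨k, rfl⟩ : ∃ k', k = k' + 1 + 1 := ⟨k - 2, by omega⟩
  have fin : ∀ a ∈ A, ∀ b ∈ A, a - b ∉ H → ∀ r ∈ foldSum (k + 1) A, ∀ r' ∈ foldSum l A,
      (a + r) - (b + r') ∉ H := by
    intro a ha b hb hab r hr r' hr' hin
    obtain ⟨p, hp, q, hq, hpq⟩ := exists_sub_eq hlt ha hb hab (H.neg_mem hin)
    have h1 : p + r ∈ foldSum (k + 1 + 1) A := Finset.add_mem_add hp hr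
    have h2 : q + r' ∈ foldSum (l + 1) A := Finset.add_mem_add hq hr'
    have h3 : p + r = q + r' := by
      rw [eq_add_of_sub_eq hpq]
      abel
    rw [h3] at h1
    exact Finset.disjoint_left.1 hA h1 h2
  unfold KLSumFree
  rw [Finset.disjoint_left]
  intro z hz hz'
  obtain ⟨x, hx, hzx⟩ := foldSum_add_sgF hz
  obtain ⟨y, hy, hzy⟩ := foldSum_add_sgF hz'
  have hxy : x - y ∈ H := by
    rw [show x - y = (z - y) - (z - x) by abel]
    exact H.sub_mem hzy hzx
  obtain ⟨b, hb, r', hr', hyb⟩ := Finset.mem_add.1 hy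
  obtain ⟨a, ha, r, hr, hxa⟩ := Finset.mem_add.1 hx
  by_cases hab : a - b ∈ H
  swap
  · exact fin a ha b hb hab r hr r' hr' (by rw [hxa, hyb]; exact hxy)
  rcases foldSum_split (H := H) b hx with ⟨k', hk', a', ha', hab', s, hs, hxs⟩ | hxb
  · obtain rfl : k + 1 = k' := by omega
    exact fin a' ha' b hb hab' s hs r' hr' (by rw [← hxs, hyb]; exact hxy)
  rcases foldSum_split (H := H) b hy with ⟨l', hl', b', hb', hbb', s, hs, hys⟩ | hyb'
  · obtain rfl : l = l' := by omega
    refine fin a ha b' hb' ?_ r hr s hs (by rw [← hys, hxa]; exact hxy)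
    intro hh
    apply hbb'
    rw [show b' - b = (a - b) - (a - b') by abel]
    exact H.sub_mem hab hh
  · obtain ⟨c, hc, hcb⟩ := hco b hb
    refine fin b hb c hc ?_ (c + k • b) (Finset.add_mem_add hc (nsmul_mem_foldSum hb k))
      (l • b) (nsmul_mem_foldSum hb l) ?_
    · intro hh
      apply hcb
      simpa using H.neg_mem hh
    · have h1 : b + (c + k • b) - (c + l • b) =
          (x - y) - (x - (k + 1 + 1) • b) + (y - (l + 1) • b) := by
        simp only [succ_nsmul]
        abel
      rw [h1]
      exact H.add_mem (H.sub_mem hxy hxb) hyb'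

/-- If adding `S` always gains `|S|` elements inside `U` (up to saturation), then
`iS - jS` has at least `(i + j)|S|` elements (up to saturation). -/
lemma card_foldSum_sub {U : AddSubgroup G} {S : Finset G} (hSU : S ⊆ sgF U) (hS2 : 2 ≤ #S)
    (hgrow : ∀ X, Adm U S X → #X + #S ≤ #(X + S)) (i j : ℕ) :
    (i + 1 + j) * #S ≤ #(foldSum (i + 1) S + foldSum j (-S)) ∨
      #(sgF U) ≤ #(foldSum (i + 1) S + foldSum j (-S)) + 1 := by
  have hSne : S.Nonempty := Finset.card_pos.1 (by omega)
  have step : ∀ (X : Finset G) (t : ℕ), 0 < t → X ⊆ sgF U →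
      (t * #S ≤ #X ∨ #(sgF U) ≤ #X + 1) →
      ((t + 1) * #S ≤ #(X + S) ∨ #(sgF U) ≤ #(X + S) + 1) := by
    intro X t ht hXU hX
    have hle := card_le_add (X := X) hSne
    by_cases hc : #(X + S) + 2 ≤ #(sgF U)
    · left
      have h1 : t * #S ≤ #X := by
        rcases hX with h | h
        · exact h
        · omega
      have h2 : #S ≤ t * #S := Nat.le_mul_of_pos_left _ ht
      have := hgrow X ⟨hXU, by omega, hc⟩
      rw [Nat.succ_mul]
      omega
    · right
      omega
  have hNU := neg_subset_sgF hSU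
  induction j with
  | zero =>
    rw [show foldSum 0 (-S) = 0 from rfl, add_zero, add_zero]
    induction i with
    | zero => left; simp [foldSum]
    | succ i ih =>
      rw [foldSum_succ (i + 1), add_comm S]
      exact step _ _ (by omega) (foldSum_subset_sgF hSU _) ih
  | succ j ih =>
    have h := step (-(foldSum (i + 1) S + foldSum j (-S))) (i + 1 + j) (by omega)
      (neg_subset_sgF (add_subset_sgF (foldSum_subset_sgF hSU _) (foldSum_subset_sgF hNU _)))
      (by rw [Finset.card_neg]; exact ih)
    have e : foldSum (i + 1) S + foldSum (j + 1) (-S) =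
        -(-(foldSum (i + 1) S + foldSum j (-S)) + S) := by
      rw [foldSum_succ j, neg_add, neg_neg, add_comm (-S), add_assoc]
    rw [e, Finset.card_neg]
    exact h

/-- A sum-free set with at least two elements which stops being sum-free on adding any nontrivial
subgroup is an arithmetic progression, or has density at most `1 / (k + l)`. -/
theorem ap_or_small {A : Finset G} {k l : ℕ} (hl : 0 < l) (hkl : l < k) (hA : KLSumFree k l A)
    (hA2 : 2 ≤ #A)
    (hmax : ∀ H : AddSubgroup G, KLSumFree k l (A + sgF H) → #(sgF H) < 2) :
    (∃ a b : G, A = (Finset.range #A).image (fun i : ℕ => a + i • b)) ∨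
      (k + l) * #A ≤ Fintype.card G := by
  obtain ⟨a₀, ha₀⟩ : A.Nonempty := Finset.card_pos.1 (by omega)
  obtain ⟨S, hS⟩ : ∃ S, S = (-a₀) +ᵥ A := ⟨_, rfl⟩
  have hAS : A = a₀ +ᵥ S := by simp [hS]
  have hcS : #S = #A := by rw [hS, Finset.card_vadd_finset]
  have hmemS : ∀ {x}, x ∈ S ↔ x + a₀ ∈ A := by
    intro x
    rw [hS, mem_tr, sub_neg_eq_add]
  -- the subgroup generated by the differences of `A`
  let U := AddSubgroup.closure (S : Set G)
  have hSU : S ⊆ sgF U := fun x hx => mem_sgF.2 (AddSubgroup.subset_closure hx)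
  have hSc := Finset.card_le_card hSU
  have hAU : ∀ a ∈ A, a - a₀ ∈ U := fun a ha => mem_sgF.1 (hSU (hmemS.2 (by simpa using ha)))
  have hx : k • a₀ - l • a₀ ∈ U := by
    by_contra hx
    have := hmax U (by
      unfold KLSumFree
      rw [Finset.disjoint_left]
      intro z hz hz'
      obtain ⟨u, hu, hzu⟩ := foldSum_add_sgF hz
      obtain ⟨v, hv, hzv⟩ := foldSum_add_sgF hz'
      have hred : ∀ {i w}, w ∈ foldSum i A → w - i • a₀ ∈ U := by
        intro i w hw
        rcases foldSum_split (H := U) a₀ hw with ⟨_, _, a, ha, hna, _⟩ | h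
        · exact absurd (hAU a ha) hna
        · exact h
      apply hx
      rw [show k • a₀ - l • a₀ = ((z - v) + (v - l • a₀)) - ((z - u) + (u - k • a₀)) by abel]
      exact U.sub_mem (U.add_mem hzv (hred hv)) (U.add_mem hzu (hred hu)))
    omega
  obtain ⟨l, rfl⟩ : ∃ l', l = l' + 1 := ⟨l - 1, by omega⟩
  obtain ⟨k, rfl⟩ : ∃ k', k = k' + 1 := ⟨k - 1, by omega⟩
  obtain ⟨W, hW⟩ : ∃ W, W = foldSum (k + 1) S + foldSum l (-S) := ⟨_, rfl⟩
  have hSne : S.Nonempty := Finset.card_pos.1 (by omega)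
  have hWU : W ⊆ sgF U := by
    rw [hW]
    exact add_subset_sgF (foldSum_subset_sgF hSU _) (foldSum_subset_sgF (neg_subset_sgF hSU) _)
  have hWc : #S ≤ #W := by
    rw [hW, foldSum_succ, add_assoc]
    exact card_le_add ((foldSum_nonempty hSne _).add (foldSum_nonempty hSne.neg _))
  -- sum-freeness says that `S` and a translate of `W` are disjoint subsets of `U`
  have hWS : #W + #S ≤ #(sgF U) := by
    have hd : Disjoint (((k + 1) • a₀ - (l + 1) • a₀) +ᵥ W) S := by
      rw [Finset.disjoint_left]
      intro s hs hsS
      rw [mem_tr, hW] at hs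
      obtain ⟨u, hu, v, hv, huv⟩ := Finset.mem_add.1 hs
      rw [foldSum_neg, Finset.mem_neg'] at hv
      have h1 := foldSum_tr (a := a₀) hu
      have h2 := foldSum_tr (a := a₀) (k := l + 1) (Finset.add_mem_add hsS hv)
      rw [← hAS] at h1 h2
      refine Finset.disjoint_left.1 hA h1 ?_
      convert h2 using 1
      rw [eq_sub_of_add_eq huv]
      abel
    rw [← Finset.card_vadd_finset ((k + 1) • a₀ - (l + 1) • a₀) W,
      ← Finset.card_union_of_disjoint hd]
    refine Finset.card_le_card (Finset.union_subset ?_ hSU)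
    intro y hy
    rw [mem_tr] at hy
    rw [mem_sgF]
    simpa using U.add_mem (mem_sgF.1 (hWU hy)) hx
  by_cases hgrow : ∀ X, Adm U S X → #X + #S ≤ #(X + S)
  · right
    have h := card_foldSum_sub hSU (by omega) hgrow k l
    rw [← hW] at h
    have hU : #(sgF U) ≤ Fintype.card G := Finset.card_le_univ _
    have h' : (k + 1 + l) * #S ≤ #W := by
      rcases h with h | h
      · exact h
      · omega
    have : (k + 1 + (l + 1)) * #A = (k + 1 + l) * #S + #S := by rw [hcS]; ring
    omega
  · left
    push Not at hgrow
    obtain ⟨X, hX, hXS⟩ := hgrow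
    rcases vosper hSU (by omega) (by omega) hX hXS with ⟨a, b, hab⟩ | ⟨H, hHU, hH2, hHlt, hHS⟩
    · refine ⟨a₀ + a, b, ?_⟩
      rw [← hcS]
      ext x
      rw [hAS, mem_tr, hab]
      simp only [Finset.mem_image, Finset.mem_range, eq_sub_iff_add_eq', add_assoc]
      rw [← hab]
    · exfalso
      have hcAH : #(A + sgF H) = #(S + sgF H) := by
        rw [hAS, tr_add, Finset.card_vadd_finset]
      have := hmax H (sumFree_add_sgF hl hkl (by omega) (by
        intro c hc
        by_contra! hcon
        have hUH : U ≤ H := by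
          refine (AddSubgroup.closure_le H).2 ?_
          intro s hs
          have h1 := hcon _ (hmemS.1 hs)
          have h2 := hcon _ ha₀
          have := H.sub_mem h1 h2
          rwa [show s + a₀ - c - (a₀ - c) = s by abel] at this
        have h1 : sgF U ⊆ sgF H := fun x hx => mem_sgF.2 (hUH (mem_sgF.1 hx))
        have h2 := Finset.card_le_card h1
        have h3 := card_le_add (X := sgF H) hSne
        rw [add_comm] at h3
        omega) hA)
      omega

end Isoperimetric

/-! ### Reduction between `ZMod n` and `ZMod d` -/

lemma foldSum_map {G G' F : Type*} [AddCommGroup G] [AddCommGroup G'] [DecidableEq G]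
    [DecidableEq G'] [FunLike F G G'] [AddMonoidHomClass F G G'] (f : F) {A : Finset G}
    {B : Finset G'} (h : ∀ a ∈ A, f a ∈ B) {k : ℕ} {u : G} (hu : u ∈ foldSum k A) :
    f u ∈ foldSum k B := by
  induction k generalizing u with
  | zero =>
    simp only [foldSum, Finset.mem_singleton] at hu ⊢
    rw [hu, map_zero]
  | succ k ih =>
    obtain ⟨a, ha, r, hr, rfl⟩ := Finset.mem_add.1 hu
    rw [map_add]
    exact Finset.add_mem_add (h a ha) (ih hr)

lemma foldSum_lift {G G' F : Type*} [AddCommGroup G] [AddCommGroup G'] [DecidableEq G]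
    [DecidableEq G'] [FunLike F G G'] [AddMonoidHomClass F G G'] (f : F) {A : Finset G}
    {k : ℕ} {x : G'} (hx : x ∈ foldSum k (A.image f)) : ∃ u ∈ foldSum k A, f u = x := by
  induction k generalizing x with
  | zero =>
    simp only [foldSum, Finset.mem_singleton] at hx
    exact ⟨0, by simp [foldSum], by rw [hx, map_zero]⟩
  | succ k ih =>
    obtain ⟨y, hy, r, hr, rfl⟩ := Finset.mem_add.1 hx
    obtain ⟨a, ha, rfl⟩ := Finset.mem_image.1 hy
    obtain ⟨u, hu, rfl⟩ := ih hr
    exact ⟨a + u, Finset.add_mem_add ha hu, map_add f a u⟩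

lemma klSumFree_empty {G : Type*} [AddCommGroup G] [DecidableEq G] {k l : ℕ} (hl : 0 < l) :
    KLSumFree k l (∅ : Finset G) := by
  obtain ⟨l, rfl⟩ : ∃ l', l = l' + 1 := ⟨l - 1, by omega⟩
  simp [KLSumFree, foldSum]

/-- The reduction `ZMod n → ZMod d` is `n / d` to one. -/
lemma card_preimage_castHom {n d : ℕ} [NeZero n] [NeZero d] (hd : d ∣ n) (B : Finset (ZMod d)) :
    #(Finset.univ.filter (fun x : ZMod n => ZMod.castHom hd (ZMod d) x ∈ B)) = #B * (n / d) := by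
  have hsurj : Function.Surjective (ZMod.castHom hd (ZMod d)) :=
    ZMod.castHom_surjective hd
  have hfib : ∀ b : ZMod d, #(Finset.univ.filter (fun x : ZMod n => ZMod.castHom hd (ZMod d) x = b))
      = #(Finset.univ.filter (fun x : ZMod n => ZMod.castHom hd (ZMod d) x = 0)) := fun b =>
    AddMonoidHom.card_fiber_eq_of_mem_range (ZMod.castHom hd (ZMod d)) (hsurj b) (hsurj 0)
  have hgen : ∀ B : Finset (ZMod d),
      #(Finset.univ.filter (fun x : ZMod n => ZMod.castHom hd (ZMod d) x ∈ B)) =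
        #B * #(Finset.univ.filter (fun x : ZMod n => ZMod.castHom hd (ZMod d) x = 0)) := by
    intro B
    rw [Finset.card_eq_sum_card_fiberwise
      (s := Finset.univ.filter (fun x : ZMod n => ZMod.castHom hd (ZMod d) x ∈ B)) (f := ZMod.castHom hd (ZMod d)) (t := B)
      (fun x hx => by
        have hx' := (Finset.mem_filter.1 (Finset.mem_coe.1 hx)).2
        exact Finset.mem_coe.2 hx')]
    rw [Finset.sum_const_nat]
    intro b hb
    rw [← hfib b, Finset.filter_filter]
    congr 1
    ext x
    simp only [Finset.mem_filter, Finset.mem_univ, true_and]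
    exact ⟨fun h => h.2, fun h => ⟨h ▸ hb, h⟩⟩
  have htot := hgen Finset.univ
  simp only [Finset.mem_univ, Finset.filter_true, Finset.card_univ, ZMod.card] at htot
  rw [hgen B]
  congr 1
  exact (Nat.div_eq_of_eq_mul_right (NeZero.pos d) htot).symm

lemma card_le_mu {n k l : ℕ} [NeZero n] {A : Finset (ZMod n)} (hA : KLSumFree k l A) :
    #A ≤ mu (ZMod n) k l := by
  refine le_csSup ⟨n, ?_⟩ ⟨A, hA, rfl⟩
  rintro m ⟨B, -, rfl⟩
  simpa [ZMod.card] using Finset.card_le_univ B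

lemma exists_mu {n k l : ℕ} [NeZero n] (hl : 0 < l) :
    ∃ A : Finset (ZMod n), KLSumFree k l A ∧ #A = mu (ZMod n) k l := by
  refine Nat.sSup_mem (s := {m | ∃ A : Finset (ZMod n), KLSumFree k l A ∧ A.card = m})
    ⟨0, ∅, klSumFree_empty hl, rfl⟩ ⟨n, ?_⟩
  rintro m ⟨B, -, rfl⟩
  simpa [ZMod.card] using Finset.card_le_univ B

lemma alphaZ_bdd (d k l : ℕ) [NeZero d] :
    BddAbove {m | ∃ a b : ZMod d, (apSet d a b m).card = m ∧ KLSumFree k l (apSet d a b m)} := by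
  refine ⟨d, ?_⟩
  rintro m ⟨a, b, hm, -⟩
  have := Finset.card_le_univ (apSet d a b m)
  rw [ZMod.card, hm] at this
  exact this

lemma le_alphaZ {d k l m : ℕ} [NeZero d] {a b : ZMod d} (hm : #(apSet d a b m) = m)
    (h : KLSumFree k l (apSet d a b m)) : m ≤ alphaZ d k l :=
  le_csSup (alphaZ_bdd d k l) ⟨a, b, hm, h⟩

lemma exists_alphaZ {d k l : ℕ} [NeZero d] (hl : 0 < l) :
    ∃ A : Finset (ZMod d), KLSumFree k l A ∧ #A = alphaZ d k l := by
  have := Nat.sSup_mem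
    (s := {m | ∃ a b : ZMod d, (apSet d a b m).card = m ∧ KLSumFree k l (apSet d a b m)})
    ⟨0, 0, 0, by simp [apSet], by simpa [apSet] using klSumFree_empty hl⟩ (alphaZ_bdd d k l)
  obtain ⟨a, b, hm, h⟩ := this
  exact ⟨_, h, hm⟩

/-! ### Sum-free intervals -/

/-- Bézout modulo `n`. -/
lemma gcd_eq_mul {n : ℕ} (c : ℕ) :
    ∃ a : ℤ, ((Nat.gcd c n : ℕ) : ZMod n) = (c : ZMod n) * (a : ZMod n) := by
  refine ⟨Nat.gcdA c n, ?_⟩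
  have h := congrArg (fun z : ℤ => (z : ZMod n)) (Nat.gcd_eq_gcd_ab c n)
  simpa using h

lemma mem_foldSum_apSet {n m i : ℕ} {a y : ZMod n} (hy : y ∈ foldSum i (apSet n a 1 m)) :
    ∃ t : ℕ, t ≤ i * (m - 1) ∧ y = (i : ZMod n) * a + t := by
  induction i generalizing y with
  | zero => exact ⟨0, by simp, by simpa [foldSum] using hy⟩
  | succ i ih =>
    obtain ⟨x, hx, r, hr, rfl⟩ := Finset.mem_add.1 hy
    obtain ⟨s, hs, rfl⟩ := Finset.mem_image.1 hx
    obtain ⟨t, ht, rfl⟩ := ih hr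
    rw [Finset.mem_range] at hs
    refine ⟨s + t, ?_, ?_⟩
    · rw [Nat.succ_mul]
      omega
    · push_cast
      simp only [nsmul_eq_mul, mul_one]
      ring

/-- Intervals of density at most `1 / (k + l)` can be translated to be `(k,l)`-sum-free: the
interval of admissible values of `(k - l) a` has length at least `k - l`, hence contains a multiple
of `gcd (k - l) n`. -/
lemma le_alphaZ_of_small {n k l m : ℕ} [NeZero n] (hl : 0 < l) (hkl : l < k) (hm : 0 < m)
    (h : (k + l) * m ≤ n) : m ≤ alphaZ n k l := by
  obtain ⟨c, rfl⟩ : ∃ c, k = l + c := ⟨k - l, by omega⟩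
  obtain ⟨m, rfl⟩ : ∃ m', m = m' + 1 := ⟨m - 1, by omega⟩
  have hc : 0 < c := by omega
  obtain ⟨a, ha⟩ := gcd_eq_mul (n := n) c
  have hg : 0 < Nat.gcd c n := Nat.gcd_pos_of_pos_left _ hc
  have hgc : Nat.gcd c n ≤ c := Nat.gcd_le_left _ hc
  obtain ⟨g, hgdef⟩ : ∃ g, g = Nat.gcd c n := ⟨_, rfl⟩
  rw [← hgdef] at ha hg hgc
  -- `g * q` is the least multiple of `g` exceeding `l * m`
  obtain ⟨q, hq⟩ : ∃ q, q = l * m / g + 1 := ⟨_, rfl⟩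
  have hq1 : l * m < g * q := by rw [hq]; exact Nat.lt_mul_div_succ _ hg
  have hq2 : g * q ≤ l * m + g := by
    rw [hq, Nat.mul_succ]
    have := Nat.mul_div_le (l * m) g
    omega
  have hexp : (l + c + l) * (m + 1) = (l + c) * m + l * m + l + c + l := by ring
  have hmn : m + 1 ≤ n := le_trans (Nat.le_mul_of_pos_left _ (by omega)) h
  refine le_alphaZ (a := (a : ZMod n) * q) (b := 1) ?_ ?_
  · unfold apSet
    rw [Finset.card_image_of_injOn, Finset.card_range]
    intro i hi j hj hij
    simp only [Finset.coe_range, Set.mem_Iio] at hi hj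
    simp only [nsmul_eq_mul, mul_one, add_right_inj] at hij
    rw [ZMod.natCast_eq_natCast_iff'] at hij
    rwa [Nat.mod_eq_of_lt (by omega), Nat.mod_eq_of_lt (by omega)] at hij
  · unfold KLSumFree
    rw [Finset.disjoint_left]
    intro y hy hy'
    obtain ⟨t, ht, hyt⟩ := mem_foldSum_apSet hy
    obtain ⟨t', ht', hyt'⟩ := mem_foldSum_apSet hy'
    simp only [Nat.add_sub_cancel] at ht ht'
    obtain ⟨w, hw⟩ : ∃ w, g * q = t' + w := ⟨g * q - t', by omega⟩
    have h1 : ((w + t : ℕ) : ZMod n) = 0 := by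
      have h2 : ((g * q : ℕ) : ZMod n) = t' + w := by rw [hw]; push_cast; ring
      have h3 : ((g * q : ℕ) : ZMod n) = c * (a * q) := by push_cast; rw [ha]; ring
      rw [h3] at h2
      rw [hyt] at hyt'
      push_cast at hyt' ⊢
      linear_combination hyt' - h2
    rw [ZMod.natCast_eq_zero_iff] at h1
    have := Nat.le_of_dvd (by omega) h1
    omega

/-! ### The two inequalities -/

/-- A sum-free set of `ZMod n` that is periodic modulo a nontrivial subgroup comes from
a sum-free set of `ZMod d` for a proper divisor `d` of `n`. -/
lemma exists_quotient {n k l : ℕ} [NeZero n] (hl : 0 < l) {A : Finset (ZMod n)}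
    (hA : KLSumFree k l A) {h : ZMod n} (hh : h ≠ 0) (hper : ∀ a ∈ A, a + h ∈ A) :
    ∃ d, d ∣ n ∧ d < n ∧ ∃ B : Finset (ZMod d), KLSumFree k l B ∧ #A = #B * (n / d) := by
  obtain ⟨P, hP, hPA⟩ := exists_stab (M := {h}) (T := A) (by simpa using hper)
  have hhP : h ∈ P := mem_sgF.1 (hP (by simp))
  obtain ⟨c, hc⟩ := gcd_eq_mul (n := n) h.val
  obtain ⟨d, hd⟩ : ∃ d, d = Nat.gcd h.val n := ⟨_, rfl⟩
  rw [← hd] at hc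
  have hdn : d ∣ n := hd ▸ Nat.gcd_dvd_right _ _
  have hdP : (d : ZMod n) ∈ P := by
    rw [hc, ZMod.natCast_zmod_val, mul_comm, ← zsmul_eq_mul]
    exact P.zsmul_mem hhP c
  have hval : 0 < h.val := Nat.pos_of_ne_zero (by rwa [Ne, ZMod.val_eq_zero])
  have hdlt : d < n := by
    have h1 : d ≤ h.val := hd ▸ Nat.gcd_le_left _ hval
    exact h1.trans_lt h.val_lt
  have hd0 : 0 < d := hd ▸ Nat.gcd_pos_of_pos_left _ hval
  have : NeZero d := ⟨hd0.ne'⟩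
  let π := ZMod.castHom hdn (ZMod d)
  have hker : ∀ x : ZMod n, π x = 0 → x ∈ P := by
    intro x hx
    rw [← ZMod.natCast_zmod_val x, map_natCast, ZMod.natCast_eq_zero_iff] at hx
    obtain ⟨e, he⟩ := hx
    rw [← ZMod.natCast_zmod_val x, he, mul_comm, Nat.cast_mul, ← nsmul_eq_mul]
    exact P.nsmul_mem hdP e
  have hker' : ∀ x y : ZMod n, π x = π y → x - y ∈ P := fun x y hxy =>
    hker _ (by rw [map_sub, hxy, sub_self])
  refine ⟨d, hdn, hdlt, A.image π, ?_, ?_⟩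
  · unfold KLSumFree
    rw [Finset.disjoint_left]
    intro x hx hx'
    obtain ⟨u, hu, rfl⟩ := foldSum_lift π hx
    obtain ⟨v, hv, hvu⟩ := foldSum_lift π hx'
    obtain ⟨l, rfl⟩ : ∃ l', l = l' + 1 := ⟨l - 1, by omega⟩
    obtain ⟨a, ha, r, hr, rfl⟩ := Finset.mem_add.1 hv
    have h1 := hPA _ (hker' u _ hvu.symm) a ha
    refine Finset.disjoint_left.1 hA hu ?_
    have h2 := Finset.add_mem_add h1 hr
    rwa [show a + (u - (a + r)) + r = u by abel] at h2
  · rw [← card_preimage_castHom hdn]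
    congr 1
    ext x
    simp only [Finset.mem_filter, Finset.mem_univ, true_and, Finset.mem_image]
    constructor
    · exact fun hx => ⟨x, hx, rfl⟩
    · rintro ⟨a, ha, hax⟩
      have := hPA _ (hker' x a hax.symm) a ha
      simpa using this

/-- A maximum sum-free set with a nonzero period descends to a proper quotient, where induction
applies. Without period it is a progression or so sparse that an interval does as well. -/
lemma mu_le {n k l : ℕ} (hn : 0 < n) (hl : 0 < l) (hkl : l < k) :
    ∃ d, d ∣ n ∧ mu (ZMod n) k l ≤ alphaZ d k l * (n / d) := by
  induction n using Nat.strong_induction_on with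
  | _ n ih =>
  have : NeZero n := ⟨hn.ne'⟩
  obtain ⟨A, hA, hAc⟩ := exists_mu (n := n) (k := k) hl
  by_cases hper : ∃ h : ZMod n, h ≠ 0 ∧ ∀ a ∈ A, a + h ∈ A
  · obtain ⟨h, hh, hper⟩ := hper
    obtain ⟨d, hdn, hdlt, B, hB, hAB⟩ := exists_quotient hl hA hh hper
    have hd0 : 0 < d := Nat.pos_of_dvd_of_pos hdn hn
    have : NeZero d := ⟨hd0.ne'⟩
    obtain ⟨e, hed, he⟩ := ih d hdlt hd0
    refine ⟨e, hed.trans hdn, ?_⟩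
    have h1 := card_le_mu hB
    calc mu (ZMod n) k l = #B * (n / d) := by rw [← hAc, hAB]
      _ ≤ (alphaZ e k l * (d / e)) * (n / d) := Nat.mul_le_mul_right _ (h1.trans he)
      _ = alphaZ e k l * (n / e) := by
        rw [mul_assoc, mul_comm (d / e), Nat.div_mul_div hdn hed]
  · refine ⟨n, dvd_rfl, ?_⟩
    rw [Nat.div_self hn, mul_one, ← hAc]
    push Not at hper
    rcases Nat.lt_or_ge #A 2 with h2 | h2
    · rcases Nat.eq_zero_or_pos #A with h0 | h0
      · omega
      · have h1 : #A = 1 := by omega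
        obtain ⟨a, ha⟩ := Finset.card_eq_one.1 h1
        have e : apSet n a 1 1 = A := by simp [apSet, ha]
        rw [h1]
        exact le_alphaZ (a := a) (b := 1) (by rw [e, h1]) (by rw [e]; exact hA)
    · rcases ap_or_small hl hkl hA h2 (by
        intro H hH
        -- `A + H` is no larger than `A` by maximality, so `A` is `H`-periodic
        by_contra! hH2
        obtain ⟨h, hhH, hh0⟩ := Finset.exists_mem_ne (show 1 < #(sgF H) by omega) 0
        obtain ⟨a, ha, hah⟩ := hper h hh0
        apply hah
        have hsub : A ⊆ A + sgF H := by
          simpa using tr_subset_add (M := A) (mem_sgF.2 H.zero_mem : (0 : ZMod n) ∈ sgF H)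
        have heq := Finset.eq_of_subset_of_card_le hsub (hAc ▸ card_le_mu hH)
        rw [heq]
        exact Finset.add_mem_add ha hhH) with ⟨a, b, hab⟩ | hsmall
      · have e : apSet n a b #A = A := hab.symm
        exact le_alphaZ (a := a) (b := b) (by rw [e]) (by rw [e]; exact hA)
      · rw [ZMod.card] at hsmall
        exact le_alphaZ_of_small hl hkl (by omega) hsmall

lemma le_mu {n d k l : ℕ} (hn : 0 < n) (hl : 0 < l) (hd : d ∣ n) :
    alphaZ d k l * (n / d) ≤ mu (ZMod n) k l := by
  have : NeZero n := ⟨hn.ne'⟩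
  have : NeZero d := ⟨(Nat.pos_of_dvd_of_pos hd hn).ne'⟩
  obtain ⟨B, hB, hBc⟩ := exists_alphaZ (d := d) (k := k) hl
  rw [← hBc, ← card_preimage_castHom hd]
  refine card_le_mu ?_
  unfold KLSumFree
  rw [Finset.disjoint_left]
  intro x hx hx'
  have hmap : ∀ a ∈ Finset.univ.filter (fun x : ZMod n => ZMod.castHom hd (ZMod d) x ∈ B),
      ZMod.castHom hd (ZMod d) a ∈ B := fun a ha => (Finset.mem_filter.1 ha).2
  exact Finset.disjoint_left.1 hB (foldSum_map _ hmap hx) (foldSum_map _ hmap hx')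

theorem stmt11 (n k l : ℕ) (hn : 0 < n) (hl : 0 < l) (hkl : l < k) :
    mu (ZMod n) k l = n.divisors.sup (fun d => alphaZ d k l * (n / d)) := by
  apply le_antisymm
  · obtain ⟨d, hd, h⟩ := mu_le hn hl hkl
    exact h.trans (Finset.le_sup (f := fun d => alphaZ d k l * (n / d))
      (Nat.mem_divisors.2 ⟨hd, hn.ne'⟩))
  · exact Finset.sup_le fun d hd => le_mu hn hl (Nat.dvd_of_mem_divisors hd)
end

section
/- Let G be a finite abelian group of order n and exponent e(G), and let k > l be positive integers. Then μ(G,{k,l}) ≥ max over all positive divisors d of e(G) of ⌈(d − (δ − r))/(k + l)⌉ · (n/d), where δ = gcd(d, k − l) and r is the remainder of l·⌈(d − δ)/(k + l)⌉ upon division by δ. -/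
/-!
The bound comes from pulling back an interval of a cyclic quotient.

Let `d` divide the exponent of `G`. Then `G` has a character of order exactly `d`, whose image is
cyclic of order `d`; hence there is a surjection `f : G →+ ZMod d`
(`exists_surjective_zmod`), all of whose fibres have `|G| / d` elements.

Let `t + 1` be the desired number of residues and take `B = f ⁻¹ {a, a + 1, …, a + t}`. Every
element of `h B` is sent by `f` into `{h a, …, h a + h t}`, so `B` is `(k, l)`-sum-free as soon as
`(k - l) a` is congruent modulo `d` to some `s` with `l t < s` and `s + k t < d`
(`klSumFree_preimage`). The residues of the form `(k - l) a` are the multiples of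
`δ = gcd (d, k - l)`, so what is needed is a multiple of `δ` in the interval `(l t, d - k t)`. Put
`c = ⌈(d - δ) / (k + l)⌉`. As `r < δ ≤ k - l`, the number `t + 1` is either `c` or `c + 1`. If it is
`c`, the interval contains at least `δ` consecutive integers. If it is `c + 1`, then
`l t = l c ≡ r` modulo `δ`, so `l t + δ - r` is a multiple of `δ`, and it is small enough by the
definition of `t` (`exists_multiple_in_gap`).
-/

open Finset Pointwise

lemma cdiv_le_iff {a b m : ℕ} (hb : 0 < b) : cdiv a b ≤ m ↔ a ≤ b * m := by
  unfold cdiv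
  rw [← Nat.lt_succ_iff, Nat.div_lt_iff_lt_mul hb, Nat.succ_mul, mul_comm m b]
  omega

lemma lt_cdiv_iff {a b m : ℕ} (hb : 0 < b) : m < cdiv a b ↔ b * m < a := by
  rw [← not_le, cdiv_le_iff hb, not_le]

/-- The dual of a finite abelian group is isomorphic to it, so there is a character of order `d`;
its image is a finite subgroup of `ℂˣ`, hence cyclic, and its exponent is `d`. -/
lemma exists_surjective_zmod (G : Type*) [AddCommGroup G] [Finite G] {d : ℕ}
    (hd : d ∣ AddMonoid.exponent G) : ∃ f : G →+ ZMod d, Function.Surjective f := by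
  have hne : Monoid.exponent (Multiplicative G) ≠ 0 := Monoid.exponent_ne_zero_of_finite
  have : NeZero (Monoid.exponent (Multiplicative G)) := ⟨hne⟩
  obtain ⟨e⟩ := CommGroup.monoidHom_mulEquiv_of_hasEnoughRootsOfUnity (Multiplicative G) ℂ
  obtain ⟨g, hg⟩ := Monoid.exists_orderOf_eq_exponent
    (Monoid.ExponentExists.of_finite (G := Multiplicative G))
  rw [← Monoid.exponent_multiplicative, ← hg] at hd
  obtain ⟨χ, hχ⟩ : ∃ χ : Multiplicative G →* ℂˣ, orderOf χ = d := by
    refine ⟨e.symm (g ^ (orderOf g / d)), ?_⟩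
    rw [MulEquiv.orderOf_eq]
    exact orderOf_pow_orderOf_div (orderOf_pos g).ne' hd
  have hfin : Finite χ.range := Finite.of_surjective _ χ.rangeRestrict_surjective
  have hcyc : IsCyclic χ.range := inferInstance
  have hcard : Nat.card χ.range = d := by
    rw [← IsCyclic.exponent_eq_card, ← hχ]
    apply Nat.dvd_antisymm
    · refine Monoid.exponent_dvd_of_forall_pow_eq_one ?_
      rintro ⟨_, x, rfl⟩
      ext1
      have := DFunLike.congr_fun (pow_orderOf_eq_one χ) x
      rwa [MonoidHom.pow_apply] at this
    · rw [orderOf_dvd_iff_pow_eq_one]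
      refine MonoidHom.ext fun x => ?_
      have := Monoid.pow_exponent_eq_one (χ.rangeRestrict x)
      simpa using congrArg Subtype.val this
  subst hcard
  let φ : Multiplicative G →* Multiplicative (ZMod (Nat.card χ.range)) :=
    (zmodCyclicMulEquiv hcyc).symm.toMonoidHom.comp χ.rangeRestrict
  exact ⟨MonoidHom.toAdditive φ,
    (zmodCyclicMulEquiv hcyc).symm.surjective.comp χ.rangeRestrict_surjective⟩

/-- The `h`-fold sumset of a preimage of `{a, …, a + t}` maps into `{h a, …, h a + h t}`. -/
lemma map_foldSum {G : Type*} [AddCommGroup G] [DecidableEq G] {d : ℕ} (f : G →+ ZMod d)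
    (a : ZMod d) (t : ℕ) (B : Finset G) (hB : ∀ x ∈ B, ∃ i ≤ t, f x = a + (i : ℕ)) (h : ℕ) :
    ∀ x ∈ foldSum h B, ∃ i ≤ h * t, f x = h * a + (i : ℕ) := by
  induction h with
  | zero => intro x hx; exact ⟨0, by simp, by simp_all [foldSum]⟩
  | succ h ih =>
    intro x hx
    obtain ⟨y, hy, z, hz, rfl⟩ := Finset.mem_add.1 hx
    obtain ⟨i, hi, hyi⟩ := hB y hy
    obtain ⟨j, hj, hzj⟩ := ih z hz
    refine ⟨i + j, by rw [Nat.succ_mul]; omega, ?_⟩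
    rw [map_add, hyi, hzj]
    push_cast
    ring

lemma klSumFree_preimage {G : Type*} [AddCommGroup G] [DecidableEq G] {d k l : ℕ} (hkl : l < k)
    (f : G →+ ZMod d) (a : ZMod d) (t s : ℕ) (hs : ((k - l : ℕ) : ZMod d) * a = s)
    (hls : l * t < s) (hks : s + k * t < d) (B : Finset G)
    (hB : ∀ x ∈ B, ∃ i ≤ t, f x = a + (i : ℕ)) : KLSumFree k l B := by
  refine Finset.disjoint_left.2 fun x hxk hxl => ?_
  obtain ⟨i, hi, hxi⟩ := map_foldSum f a t B hB k x hxk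
  obtain ⟨j, hj, hxj⟩ := map_foldSum f a t B hB l x hxl
  have heq : ((s + i : ℕ) : ZMod d) = (j : ℕ) := by
    rw [Nat.cast_sub hkl.le] at hs
    push_cast
    linear_combination hxj - hxi - hs
  rw [ZMod.natCast_eq_natCast_iff', Nat.mod_eq_of_lt (by omega), Nat.mod_eq_of_lt (by omega)] at heq
  omega

/-- A multiple of `gcd (d, m)` is, modulo `d`, a multiple of `m`. -/
lemma exists_mul_eq_of_gcd_dvd {d m s : ℕ} (h : Nat.gcd d m ∣ s) :
    ∃ a : ZMod d, (m : ZMod d) * a = s := by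
  obtain ⟨q, rfl⟩ := h
  refine ⟨(Nat.gcdB d m : ℤ) * q, ?_⟩
  have hb := congrArg (Int.cast : ℤ → ZMod d) (Nat.gcd_eq_gcd_ab d m)
  push_cast at hb ⊢
  rw [hb, ZMod.natCast_self]
  ring

lemma exists_multiple_in_gap {d k l t δ : ℕ} (hδ : 0 < δ) (hδd : δ ≤ d) (hδk : δ ≤ k - l)
    (hkl : l < k)
    (ht : t + 1 = cdiv (d - (δ - (l * cdiv (d - δ) (k + l)) % δ)) (k + l)) :
    ∃ s, δ ∣ s ∧ l * t < s ∧ s + k * t < d := by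
  have hpos : 0 < k + l := by omega
  have hr := Nat.mod_lt (l * cdiv (d - δ) (k + l)) hδ
  have h1 := (lt_cdiv_iff hpos).1 (lt_of_lt_of_eq (Nat.lt_succ_self t) ht)
  have hle : t ≤ cdiv (d - δ) (k + l) := by
    by_contra hcon
    have h2 := (cdiv_le_iff hpos).1 (Nat.le_sub_one_of_lt (not_le.1 hcon))
    have h3 : (k + l) * t = (k + l) * (t - 1) + (k + l) := by
      rw [← Nat.mul_succ]
      congr 1
      omega
    omega
  -- the least multiple of `δ` exceeding `l * t`
  refine ⟨δ * (l * t / δ + 1), dvd_mul_right _ _, Nat.lt_mul_div_succ _ hδ, ?_⟩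
  have hdiv := Nat.div_add_mod (l * t) δ
  have hexp : (k + l) * t = k * t + l * t := add_mul _ _ _
  rw [Nat.mul_succ]
  rcases hle.eq_or_lt with heq | hlt
  · rw [← heq] at h1 hr
    omega
  · have h2 := (lt_cdiv_iff hpos).1 hlt
    omega

lemma card_preimage_mul {G H : Type*} [AddCommGroup G] [Fintype G] [AddCommGroup H] [Fintype H]
    [DecidableEq H] (f : G →+ H) (hf : Function.Surjective f) (A : Finset H) :
    (Finset.univ.filter fun x => f x ∈ A).card = A.card * (Fintype.card G / Fintype.card H) := by
  have hfib (S : Finset H) : (Finset.univ.filter fun x => f x ∈ S).card =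
      S.card * (Finset.univ.filter fun x => f x = 0).card := by
    rw [Finset.card_eq_sum_card_fiberwise (f := f) (t := S) (fun x hx => by simpa using hx),
      Finset.sum_const_nat (m := (Finset.univ.filter fun x => f x = 0).card)]
    intro y hy
    rw [← AddMonoidHom.card_fiber_eq_of_mem_range f (hf y) (hf 0)]
    congr 1
    ext x
    simp only [Finset.mem_filter, Finset.mem_univ, true_and]
    exact ⟨fun h => h.2, fun h => ⟨h ▸ hy, h⟩⟩
  have hG := hfib Finset.univ
  simp only [Finset.mem_univ, Finset.filter_true, Finset.card_univ] at hG
  rw [hfib, hG, Nat.mul_div_cancel_left _ Fintype.card_pos]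

lemma card_le_mu_s14 {G : Type*} [AddCommGroup G] [Fintype G] [DecidableEq G] {k l : ℕ}
    {B : Finset G} (hB : KLSumFree k l B) : B.card ≤ mu G k l := by
  refine le_csSup ⟨Fintype.card G, ?_⟩ ⟨B, hB, rfl⟩
  rintro _ ⟨A, -, rfl⟩
  exact A.card_le_univ

theorem stmt14 (G : Type*) [AddCommGroup G] [Fintype G] [DecidableEq G]
    (k l : ℕ) (hl : 0 < l) (hkl : l < k) :
    (AddMonoid.exponent G).divisors.sup (fun d =>
        cdiv (d - (Nat.gcd d (k - l) -
          (l * cdiv (d - Nat.gcd d (k - l)) (k + l)) % Nat.gcd d (k - l))) (k + l) *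
        (Fintype.card G / d)) ≤ mu G k l := by
  refine Finset.sup_le fun d hd => ?_
  have hde := Nat.dvd_of_mem_divisors hd
  have hd0 : 0 < d := Nat.pos_of_mem_divisors hd
  have : NeZero d := ⟨hd0.ne'⟩
  have hk : 0 < k - l := by omega
  generalize hm : cdiv (d - (Nat.gcd d (k - l) -
    (l * cdiv (d - Nat.gcd d (k - l)) (k + l)) % Nat.gcd d (k - l))) (k + l) = m
  rcases m with _ | t
  · simp
  obtain ⟨s, hδs, hls, hks⟩ := exists_multiple_in_gap (Nat.gcd_pos_of_pos_left _ hd0)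
    (Nat.gcd_le_left _ hd0) (Nat.gcd_le_right _ hk) hkl hm.symm
  obtain ⟨a, ha⟩ := exists_mul_eq_of_gcd_dvd hδs
  obtain ⟨f, hf⟩ := exists_surjective_zmod G hde
  have htd : t < d := by
    have := Nat.le_mul_of_pos_left t (hl.trans hkl)
    omega
  let A : Finset (ZMod d) := (Finset.range (t + 1)).image fun i => a + (i : ℕ)
  have hA : A.card = t + 1 := by
    rw [Finset.card_image_of_injOn, Finset.card_range]
    intro i hi j hj hij
    have hi' := Finset.mem_range.1 hi
    have hj' := Finset.mem_range.1 hj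
    have heq : (i : ZMod d) = (j : ℕ) := add_left_cancel hij
    rwa [ZMod.natCast_eq_natCast_iff', Nat.mod_eq_of_lt (by omega),
      Nat.mod_eq_of_lt (by omega)] at heq
  have hcard := card_preimage_mul f hf A
  rw [hA, ZMod.card] at hcard
  change (t + 1) * (Fintype.card G / d) ≤ _
  rw [← hcard]
  refine card_le_mu_s14 (klSumFree_preimage hkl f a t s ha hls hks _ fun x hx => ?_)
  obtain ⟨i, hi, hxi⟩ := Finset.mem_image.1 (Finset.mem_filter.1 hx).2
  exact ⟨i, Nat.lt_succ_iff.1 (Finset.mem_range.1 hi), hxi.symm⟩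
end

section
/- Let p be a prime, let r be a positive integer, and let k > l be positive integers. If p divides k − l, then the maximum size of a (k,l)-sum-free subset of the elementary abelian group Z_p^r is 0. If p does not divide k − l and k + l does not divide p − 1, then the maximum size of a (k,l)-sum-free subset of Z_p^r equals ⌈(p−1)/(k+l)⌉ · p^{r−1}. -/
/-! The upper bound uses the polynomial method. Write `m = k + l`, `c = ⌈(p - 1) / m⌉`, `q = p ^ r`,
and identify `Z_p^r` with the additive group of the field `F` with `q` elements. Suppose
`A ⊆ F` has more than `c * p ^ (r - 1)` elements, and consider the polynomial
`f = (x_1 + ⋯ + x_k - y_1 - ⋯ - y_l) ^ (q - 1) - 1` in `m` variables, which vanishes at a point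
iff the linear form inside does not. If some monomial of degree `q - 1`, with every exponent
smaller than `#A`, has nonzero coefficient in `f`, then the combinatorial Nullstellensatz gives
a point of `A ^ m` at which `f` does not vanish, that is, a common element of `kA` and `lA`.

Up to sign the coefficient is a multinomial coefficient, which is nonzero modulo `p` when the
exponents add up to `q - 1` without carries in base `p`. Since `m` does not divide `p - 1`, we have
`m * c ≥ p`, so there are digits `u_j ≤ c` with sum `p - 1`, at least one of them (say `u_i`) below
`c`. The exponents `u_j * p ^ (r - 1)`, increased by `p ^ (r - 1) - 1` at `j = i`, are then all at
most `c * p ^ (r - 1)` and add up to `q - 1` without carries (`not_dvd_multinomial`).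

For the lower bound take all vectors whose first coordinate lies in the interval
`{a, …, a + c - 1}` of `Z_p`, where `(k - l) * a = 1 + l * (c - 1)`: an element of `kA - lA` has
first coordinate in `{1, …, 1 + m * (c - 1)}`, and `1 + m * (c - 1) ≤ p - 1`. -/

open Finset Pointwise

open scoped Nat

lemma foldSum_empty {G : Type*} [AddCommMonoid G] [DecidableEq G] {n : ℕ} (hn : 0 < n) :
    foldSum n (∅ : Finset G) = ∅ := by
  obtain ⟨n, rfl⟩ := Nat.exists_eq_succ_of_ne_zero hn.ne'
  simp [foldSum]

lemma sum_mem_foldSum {G : Type*} [AddCommMonoid G] [DecidableEq G] {A : Finset G} {n : ℕ}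
    (f : Fin n → G) (hf : ∀ i, f i ∈ A) : ∑ i, f i ∈ foldSum n A := by
  induction n with
  | zero => simp [foldSum]
  | succ n ih =>
    rw [Fin.sum_univ_succ]
    exact Finset.add_mem_add (hf 0) (ih _ fun i => hf _)

/-- For a single digit `u`, the valuation of `(u * p ^ s)!` is proportional to `u`, and adding
`p ^ s - 1` to the argument increases it by an amount independent of `u`. -/
lemma padicValNat_factorial_mul_pow_add (p : ℕ) [hp : Fact p.Prime] (s : ℕ) :
    ∃ e f, ∀ u, u < p → padicValNat p (u * p ^ s)! = u * e ∧
      padicValNat p (u * p ^ s + (p ^ s - 1))! = u * e + f := by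
  induction s with
  | zero =>
    refine ⟨0, 0, fun u hu => ?_⟩
    have h := padicValNat_factorial_mul_add (p := p) 0 hu
    constructor <;> simpa using h
  | succ s ih =>
    obtain ⟨e, f, h⟩ := ih
    refine ⟨e + p ^ s, f + (p ^ s - 1), fun u hu => ⟨?_, ?_⟩⟩
    · rw [show u * p ^ (s + 1) = p * (u * p ^ s) by ring, padicValNat_factorial_mul, (h u hu).1]
      ring
    · have hp1 := hp.out.one_lt
      have h1 : 1 ≤ p ^ s := Nat.one_le_pow _ _ (by omega)
      have h2 : u * p ^ (s + 1) + (p ^ (s + 1) - 1)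
          = p * (u * p ^ s + (p ^ s - 1)) + (p - 1) := by
        obtain ⟨t, ht⟩ := Nat.exists_eq_add_of_le h1
        obtain ⟨w, hw⟩ := Nat.exists_eq_add_of_le hp1.le
        have : p ^ (s + 1) - 1 = p * t + (p - 1) := by
          rw [pow_succ, ht, hw]
          have : (1 + t) * (1 + w) = 1 + ((1 + w) * t + w) := by ring
          omega
        rw [this, show p ^ s - 1 = t by omega]
        ring
      rw [h2, padicValNat_factorial_mul_add _ (by omega), padicValNat_factorial_mul, (h u hu).2]
      ring

/-- Exponents that add up without carries in base `p`: the `u j` are top digits with sum less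
than `p`, and all lower digits, each equal to `p - 1`, sit in a single exponent. -/
lemma not_dvd_multinomial {ι : Type*} [Fintype ι] [DecidableEq ι] (p : ℕ) [hp : Fact p.Prime]
    (s : ℕ) (u : ι → ℕ) (hu : ∑ j, u j < p) (i : ι) :
    ¬ p ∣ Nat.multinomial univ
      (fun j => u j * p ^ s + if j = i then p ^ s - 1 else 0) := by
  obtain ⟨e, f, h⟩ := padicValNat_factorial_mul_pow_add p s
  have hlt : ∀ j, u j < p := fun j =>
    (Finset.single_le_sum (fun _ _ => Nat.zero_le _) (mem_univ j)).trans_lt hu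
  set t : ι → ℕ := fun j => u j * p ^ s + if j = i then p ^ s - 1 else 0 with ht
  have hspec := Nat.multinomial_spec univ t
  have hsum : ∑ j, t j = (∑ j, u j) * p ^ s + (p ^ s - 1) := by
    simp [ht, Finset.sum_add_distrib, Finset.sum_mul]
  have hval : padicValNat p (∏ j, (t j)!) = (∑ j, u j) * e + f := by
    have hprod : ∀ S : Finset ι, padicValNat p (∏ j ∈ S, (t j)!) =
        ∑ j ∈ S, padicValNat p (t j)! := by
      intro S
      induction S using Finset.induction_on with
      | empty => simp
      | insert a S ha ih =>
        rw [Finset.prod_insert ha, Finset.sum_insert ha, padicValNat.mul (Nat.factorial_ne_zero _)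
          (Finset.prod_ne_zero_iff.2 fun _ _ => Nat.factorial_ne_zero _), ih]
    rw [hprod]
    have : ∀ j, padicValNat p (t j)! = u j * e + if j = i then f else 0 := by
      intro j
      by_cases hj : j = i
      · simpa [ht, hj] using (h (u i) (hlt i)).2
      · simpa [ht, hj] using (h (u j) (hlt j)).1
    simp [this, Finset.sum_add_distrib, Finset.sum_mul]
  have hv := congrArg (padicValNat p) hspec
  have hm0 : Nat.multinomial univ t ≠ 0 := (Nat.multinomial_pos _ _).ne'
  rw [padicValNat.mul (Finset.prod_ne_zero_iff.2 fun _ _ => Nat.factorial_ne_zero _) hm0, hval,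
    hsum, (h _ hu).2] at hv
  intro hdvd
  have := one_le_padicValNat_of_dvd hm0 hdvd
  omega

lemma exists_bounded_sum_eq {ι : Type*} [DecidableEq ι] (S : Finset ι) (c n : ℕ)
    (hn : n ≤ #S * c) : ∃ u : ι → ℕ, (∀ j, u j ≤ c) ∧ ∑ j ∈ S, u j = n := by
  induction S using Finset.induction_on generalizing n with
  | empty => exact ⟨fun _ => 0, by simp, by simp at hn; simp [hn]⟩
  | insert a S ha ih =>
    rw [Finset.card_insert_of_notMem ha, add_mul, one_mul] at hn
    obtain ⟨u, hu, hs⟩ := ih (n - min n c) (by omega)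
    refine ⟨Function.update u a (min n c), fun j => ?_, ?_⟩
    · by_cases hj : j = a
      · subst hj; simp
      · simpa [hj] using hu j
    · rw [Finset.sum_insert ha, Finset.sum_update_of_notMem ha, hs]
      simp

/-- A linear form with nonzero coefficients in `n` variables over a field with `p ^ (s + 1)`
elements vanishes somewhere on `A ^ n` as soon as `#A > c * p ^ s`, where `n * c ≥ p`. -/
lemma exists_linear_form_eq_zero {F ι : Type*} [Field F] [Fintype F] [Fintype ι] [DecidableEq ι]
    (p s c : ℕ) [hp : Fact p.Prime] [CharP F p] (hF : Fintype.card F = p ^ (s + 1))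
    (hc : p ≤ Fintype.card ι * c) (a : ι → F) (ha : ∀ i, a i ≠ 0) (A : Finset F)
    (hA : c * p ^ s < #A) : ∃ x : ι → F, (∀ i, x i ∈ A) ∧ ∑ i, a i * x i = 0 := by
  have hp1 := hp.out.one_lt
  have hP : 1 ≤ p ^ s := Nat.one_le_pow _ _ (by omega)
  obtain ⟨u, huc, hus⟩ := exists_bounded_sum_eq (univ : Finset ι) c (p - 1)
    (by rw [Finset.card_univ]; omega)
  obtain ⟨i, hi⟩ : ∃ i, u i < c := by
    by_contra! hcon
    have := Finset.sum_le_sum (s := univ) fun i _ => hcon i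
    simp only [sum_const, smul_eq_mul, Finset.card_univ] at this
    omega
  let t : ι →₀ ℕ := Finsupp.equivFunOnFinite.symm
    (fun j => u j * p ^ s + if j = i then p ^ s - 1 else 0)
  have hq : (p - 1) * p ^ s + (p ^ s - 1) = p ^ (s + 1) - 1 := by
    rw [Nat.sub_mul, one_mul, pow_succ, mul_comm p]
    have : p ^ s ≤ p ^ s * p := Nat.le_mul_of_pos_right _ (by omega)
    omega
  have htdeg : t.degree = p ^ (s + 1) - 1 := by
    rw [Finsupp.degree_eq_sum, ← hq, ← hus]
    simp [t, Finset.sum_add_distrib, Finset.sum_mul]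
  have hq1 : 1 < p ^ (s + 1) := Nat.one_lt_pow (by omega) hp1
  have ht0 : t ≠ 0 := by
    rintro h
    rw [h] at htdeg
    simp at htdeg
    omega
  let L : MvPolynomial ι F := ∑ j, a j • MvPolynomial.X j
  let f : MvPolynomial ι F := L ^ (p ^ (s + 1) - 1) - 1
  have hcoeff : f.coeff t ≠ 0 := by
    have h1 : (1 : MvPolynomial ι F).coeff t = 0 := by
      rw [MvPolynomial.coeff_one, if_neg (Ne.symm ht0)]
    have hts : t.sum (fun _ m => m) = p ^ (s + 1) - 1 := htdeg
    rw [MvPolynomial.coeff_sub, h1, sub_zero, MvPolynomial.coeff_linearCombination_X_pow_of_fintype,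
      if_pos hts, ← Finsupp.multinomial_of_support_subset (Finset.subset_univ _)]
    refine mul_ne_zero ?_ ?_
    · rw [Ne, CharP.cast_eq_zero_iff F p]
      exact not_dvd_multinomial p s u (by omega) i
    · exact Finset.prod_ne_zero_iff.2 fun j _ => pow_ne_zero _ (ha j)
  have hdeg : f.totalDegree = t.degree := by
    apply le_antisymm
    · rw [htdeg]
      refine (MvPolynomial.totalDegree_sub _ _).trans (max_le ?_ (by simp))
      refine (MvPolynomial.totalDegree_pow _ _).trans ?_
      have hL : L.totalDegree ≤ 1 := by
        refine MvPolynomial.totalDegree_finsetSum_le fun j _ => ?_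
        exact (MvPolynomial.totalDegree_smul_le _ _).trans (by simp)
      simpa using Nat.mul_le_mul_left (p ^ (s + 1) - 1) hL
    · exact MvPolynomial.le_totalDegree (MvPolynomial.mem_support_iff.2 hcoeff)
  have htA : ∀ j, t j < #A := by
    intro j
    refine lt_of_le_of_lt ?_ hA
    by_cases hj : j = i
    · subst hj
      have : (u j + 1) * p ^ s ≤ c * p ^ s := Nat.mul_le_mul_right _ hi
      simp only [t, Finsupp.equivFunOnFinite_symm_apply_apply, if_true]
      rw [add_mul] at this
      omega
    · simpa [t, hj] using Nat.mul_le_mul_right (p ^ s) (huc j)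
  obtain ⟨x, hx, hne⟩ := MvPolynomial.combinatorial_nullstellensatz_exists_eval_nonzero f t hcoeff
    hdeg (fun _ => A) htA
  refine ⟨x, hx, ?_⟩
  by_contra h0
  apply hne
  have hL : MvPolynomial.eval x L = ∑ i, a i * x i := by simp [L, MvPolynomial.smul_eval]
  simp only [f, map_sub, map_pow, map_one, hL]
  rw [← hF, FiniteField.pow_card_sub_one_eq_one _ h0, sub_self]

lemma card_le_of_klSumFree (p r k l c : ℕ) [hp : Fact p.Prime] (hr : 0 < r)
    (hc : p ≤ (k + l) * c) (A : Finset (Fin r → ZMod p)) (hA : KLSumFree k l A) :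
    #A ≤ c * p ^ (r - 1) := by
  by_contra! hlt
  have : Fintype (GaloisField p r) := Fintype.ofFinite _
  have hcard : Fintype.card (GaloisField p r) = p ^ (r - 1 + 1) := by
    rw [← Nat.card_eq_fintype_card, GaloisField.card p r hr.ne', Nat.sub_add_cancel hr]
  have hfin : Module.finrank (ZMod p) (Fin r → ZMod p) =
      Module.finrank (ZMod p) (GaloisField p r) := by
    rw [GaloisField.finrank p hr.ne']; simp
  let e : (Fin r → ZMod p) ≃ₗ[ZMod p] GaloisField p r := LinearEquiv.ofFinrankEq _ _ hfin
  obtain ⟨x, hx, h0⟩ := exists_linear_form_eq_zero (ι := Fin k ⊕ Fin l) p (r - 1) c hcard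
    (by simpa using hc) (Sum.elim (fun _ => 1) (fun _ => (-1 : GaloisField p r)))
    (by rintro (i | i) <;> simp) (A.map e.toEquiv.toEmbedding) (by simpa using hlt)
  have hx' : ∀ i, e.symm (x i) ∈ A := by
    intro i
    obtain ⟨y, hy, hyx⟩ := Finset.mem_map.1 (hx i)
    have : e y = x i := hyx
    rw [← this]; simpa using hy
  rw [Fintype.sum_sum_type] at h0
  simp only [Sum.elim_inl, Sum.elim_inr, one_mul, neg_mul, Finset.sum_neg_distrib] at h0
  have heq : ∑ i, e.symm (x (Sum.inl i)) = ∑ i, e.symm (x (Sum.inr i)) := by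
    rw [← map_sum, ← map_sum, add_neg_eq_zero.1 h0]
  exact Finset.disjoint_left.1 hA (sum_mem_foldSum _ fun i => hx' (Sum.inl i))
    (heq ▸ sum_mem_foldSum _ fun i => hx' (Sum.inr i))

/-- If the `z`-coordinates of `A` lie in `{a, …, a + d}`, those of `nA` lie in
`{n * a, …, n * a + n * d}`. -/
lemma foldSum_coord {ι : Type*} [Fintype ι] {p d n : ℕ} {z : ι} {a : ZMod p}
    {A : Finset (ι → ZMod p)}
    (hA : ∀ v ∈ A, ∃ i ≤ d, v z = a + (i : ℕ)) (v : ι → ZMod p) (hv : v ∈ foldSum n A) :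
    ∃ i ≤ n * d, v z = n * a + (i : ℕ) := by
  induction n generalizing v with
  | zero =>
    simp only [foldSum, mem_singleton] at hv
    exact ⟨0, by simp, by simp [hv]⟩
  | succ n ih =>
    obtain ⟨x, hx, y, hy, rfl⟩ := Finset.mem_add.1 hv
    obtain ⟨i, hi, hxi⟩ := hA x hx
    obtain ⟨j, hj, hyj⟩ := ih y hy
    refine ⟨i + j, by rw [add_mul]; omega, ?_⟩
    rw [Pi.add_apply, hxi, hyj]
    push_cast
    ring

lemma exists_klSumFree (p r k l d : ℕ) [hp : Fact p.Prime] (hr : 0 < r) (hkl : l < k)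
    (hdvd : ¬ p ∣ k - l) (hd : (k + l) * d + 1 < p) :
    ∃ A : Finset (Fin r → ZMod p), KLSumFree k l A ∧ #A = (d + 1) * p ^ (r - 1) := by
  let z : Fin r := ⟨0, hr⟩
  have hne : (k : ZMod p) - l ≠ 0 := by
    rw [← Nat.cast_sub hkl.le, Ne, ZMod.natCast_eq_zero_iff]
    exact hdvd
  let a : ZMod p := (1 + l * d) / (k - l)
  have ha : (k : ZMod p) * a - l * a = 1 + l * d := by
    rw [← sub_mul]
    exact mul_div_cancel₀ _ hne
  let I : Finset (ZMod p) := (Finset.range (d + 1)).image fun i : ℕ => a + (i : ZMod p)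
  have hdp : d + 1 < p := by
    have : d ≤ (k + l) * d := Nat.le_mul_of_pos_left _ (by omega)
    omega
  have hI : #I = d + 1 := by
    rw [Finset.card_image_of_injOn, Finset.card_range]
    intro i hi j hj hij
    simp only [coe_range, Set.mem_Iio] at hi hj
    have h1 : ((i : ℕ) : ZMod p) = (j : ℕ) := add_left_cancel hij
    have h2 := (ZMod.natCast_eq_natCast_iff' _ _ _).1 h1
    rwa [Nat.mod_eq_of_lt (by omega), Nat.mod_eq_of_lt (by omega)] at h2
  let A : Finset (Fin r → ZMod p) := Fintype.piFinset fun j => if j = z then I else univ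
  have hAz : ∀ v ∈ A, ∃ i ≤ d, v z = a + (i : ℕ) := by
    intro v hv
    have := Fintype.mem_piFinset.1 hv z
    rw [if_pos rfl] at this
    obtain ⟨i, hi, h⟩ := Finset.mem_image.1 this
    exact ⟨i, by simpa [Nat.lt_succ_iff] using hi, h.symm⟩
  refine ⟨A, ?_, ?_⟩
  · refine Finset.disjoint_left.2 fun v hk hl => ?_
    obtain ⟨i, hi, hvi⟩ := foldSum_coord hAz v hk
    obtain ⟨j, hj, hvj⟩ := foldSum_coord hAz v hl
    have h0 : ((1 + l * d - j + i : ℕ) : ZMod p) = 0 := by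
      push_cast [Nat.cast_sub (show j ≤ 1 + l * d by omega)]
      linear_combination hvj - hvi - ha
    rw [ZMod.natCast_eq_zero_iff] at h0
    have := Nat.le_of_dvd (by omega) h0
    rw [add_mul] at hd
    omega
  · rw [Fintype.card_piFinset, ← Finset.mul_prod_erase univ _ (mem_univ z), if_pos rfl, hI]
    congr 1
    rw [Finset.prod_congr rfl (g := fun _ => p)]
    · simp
    · intro j hj
      rw [if_neg (Finset.ne_of_mem_erase hj)]
      simp

theorem stmt16 (p r k l : ℕ) (hp : p.Prime) (hr : 0 < r) (hl : 0 < l) (hkl : l < k) :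
    (p ∣ k - l → mu (Fin r → ZMod p) k l = 0) ∧
      (¬ p ∣ k - l → ¬ (k + l) ∣ (p - 1) →
        mu (Fin r → ZMod p) k l = cdiv (p - 1) (k + l) * p ^ (r - 1)) := by
  have : Fact p.Prime := ⟨hp⟩
  have hp2 := hp.two_le
  refine ⟨fun hdvd => ?_, fun hdvd hndvd => ?_⟩
  · refine IsGreatest.csSup_eq ⟨⟨∅, ?_, by simp⟩, ?_⟩
    · simp [KLSumFree, foldSum_empty (hl.trans hkl)]
    · rintro m ⟨A, hA, rfl⟩
      rw [Nat.le_zero, Finset.card_eq_zero]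
      by_contra hne
      obtain ⟨a, ha⟩ := Finset.nonempty_iff_ne_empty.2 hne
      -- In characteristic `p` the multiples `k • a` and `l • a` coincide.
      have h1 := sum_mem_foldSum (n := k) (fun _ => a) fun _ => ha
      have h2 := sum_mem_foldSum (n := l) (fun _ => a) fun _ => ha
      have h3 : ∑ _i : Fin k, a = ∑ _i : Fin l, a := by
        have h4 : (k : ZMod p) = l := by
          have := (ZMod.natCast_eq_zero_iff (k - l) p).2 hdvd
          rwa [Nat.cast_sub hkl.le, sub_eq_zero] at this
        ext j
        simp [h4]
      rw [h3] at h1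
      exact Finset.disjoint_left.1 hA h1 h2
  -- As `p ≥ 2`, the ceiling of `(p - 1) / (k + l)` is `d + 1` for `d = ⌊(p - 2) / (k + l)⌋`.
  · obtain ⟨d, hd⟩ : ∃ d, (p - 2) / (k + l) = d := ⟨_, rfl⟩
    have hc : cdiv (p - 1) (k + l) = d + 1 := by
      rw [cdiv, show p - 1 + (k + l) - 1 = p - 2 + (k + l) by omega,
        Nat.add_div_right _ (by omega), hd]
    have hmod := Nat.div_add_mod (p - 2) (k + l)
    have hmlt := Nat.mod_lt (p - 2) (show 0 < k + l by omega)
    rw [hd] at hmod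
    have hge : p ≤ (k + l) * (d + 1) := by
      by_contra! hlt
      rw [mul_add, mul_one] at hlt
      exact hndvd ⟨d + 1, by rw [mul_add, mul_one]; omega⟩
    rw [hc]
    refine IsGreatest.csSup_eq ⟨exists_klSumFree p r k l d hr hkl hdvd (by omega), ?_⟩
    rintro m ⟨A, hA, rfl⟩
    exact card_le_of_klSumFree p r k l (d + 1) hr hge A hA
end
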